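/- arXiv:2602.04558 — 10 statements merged into one kernel-verified Lean document; each statement's English description precedes it below -/
import Mathlib

section
/- Let q be a prime power and let σ be an 𝔽_q-linear automorphism of 𝔽_{q^n} (viewed as an n-dimensional vector space over 𝔽_q) of finite order t. Suppose W₁ and W₂ are σ-invariant 𝔽_q-subspaces with 𝔽_{q^n} = W₁ ⊕ W₂. If Ū₁ ⊆ W₁ is a σ-covering subspace of W₁ (that is, W₁ = ⋃_{j=0}^{t-1} σ^j(Ū₁)), then Ū₁ ⊕ W₂ is a σ-covering subspace of 𝔽_{q^n}. Consequently h_σ(𝔽_{q^n}) ≥ max{h_σ(W₁), h_σ(W₂)}. -/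
noncomputable section

/-- `U` is a `σ`-covering of the subspace `W` (with `σ` of order `t`):
the union `⋃_{j=0}^{t-1} σ^j(U)` equals `W`. -/
def IsSigmaCoveringIn {F K : Type*} [Field F] [AddCommGroup K] [Module F K]
    (σ : K ≃ₗ[F] K) (t : ℕ) (W U : Submodule F K) : Prop :=
  (⋃ j ∈ Finset.range t, ⇑(σ ^ j) '' (U : Set K)) = (W : Set K)

/-- `hSigma σ t W` is the largest possible codimension (inside `W`) of a subspace
`U ⊆ W` which is a `σ`-covering of `W`. -/
def hSigma {F K : Type*} [Field F] [AddCommGroup K] [Module F K]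
    (σ : K ≃ₗ[F] K) (t : ℕ) (W : Submodule F K) : ℕ :=
  sSup {k : ℕ | ∃ U : Submodule F K, U ≤ W ∧ IsSigmaCoveringIn σ t W U ∧
    Module.finrank F W - Module.finrank F U = k}

/-!
In finite dimension an invariant subspace `W₂` satisfies `σ(W₂) = W₂`, so
`σ^j(U + W₂) = σ^j(U) + W₂`. Taking unions over `j`, a covering `U` of `W₁` gives a covering
`U + W₂` of `W₁ + W₂`; when the sum is direct the codimension is unchanged.
-/

section

open Module Pointwise

variable {F V : Type*} [Field F] [AddCommGroup V] [Module F V]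

theorem map_eq_of_forall_mem {σ : V ≃ₗ[F] V} {W : Submodule F V} [FiniteDimensional F W]
    (hW : ∀ x ∈ W, σ x ∈ W) : W.map (σ : V →ₗ[F] V) = W :=
  Submodule.eq_of_le_of_finrank_eq (Submodule.map_le_iff_le_comap.mpr hW) (σ.finrank_map_eq W)

theorem image_pow_eq_of_map_eq {σ : V ≃ₗ[F] V} {W : Submodule F V}
    (hW : W.map (σ : V →ₗ[F] V) = W) (j : ℕ) : ⇑(σ ^ j) '' (W : Set V) = W := by
  have hfixed : Function.IsFixedPt (Set.image σ) (W : Set V) := congrArg SetLike.coe hW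
  rw [LinearEquiv.coe_pow]
  exact hfixed.image_iterate j

theorem finrank_sup_of_disjoint {W₁ W₂ : Submodule F V} [FiniteDimensional F W₁]
    [FiniteDimensional F W₂] (h : Disjoint W₁ W₂) :
    finrank F ↥(W₁ ⊔ W₂) = finrank F W₁ + finrank F W₂ := by
  rw [← Submodule.finrank_sup_add_finrank_inf_eq, h.eq_bot, finrank_bot, add_zero]

theorem finrank_sup_sub_finrank_sup_of_disjoint {U W₁ W₂ : Submodule F V}
    [FiniteDimensional F W₁] [FiniteDimensional F W₂] (hU : U ≤ W₁) (h : Disjoint W₁ W₂) :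
    finrank F ↥(W₁ ⊔ W₂) - finrank F ↥(U ⊔ W₂) = finrank F W₁ - finrank F U := by
  have : FiniteDimensional F U := Submodule.finiteDimensional_of_le hU
  rw [finrank_sup_of_disjoint h, finrank_sup_of_disjoint (h.mono_left hU),
    Nat.add_sub_add_right]

theorem IsSigmaCoveringIn.sup {σ : V ≃ₗ[F] V} {t : ℕ} {W₁ W₂ U : Submodule F V}
    (hU : IsSigmaCoveringIn σ t W₁ U) (hW₂ : W₂.map (σ : V →ₗ[F] V) = W₂) :
    IsSigmaCoveringIn σ t (W₁ ⊔ W₂) (U ⊔ W₂) :=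
  calc (⋃ j ∈ Finset.range t, ⇑(σ ^ j) '' (↑(U ⊔ W₂) : Set V))
      = ⋃ j ∈ Finset.range t, (⇑(σ ^ j) '' (U : Set V) + (W₂ : Set V)) := by
        simp only [Submodule.coe_sup, Set.image_add, image_pow_eq_of_map_eq hW₂]
    _ = (⋃ j ∈ Finset.range t, ⇑(σ ^ j) '' (U : Set V)) + (W₂ : Set V) :=
        (Set.iUnion₂_add _ _).symm
    _ = (W₁ : Set V) + (W₂ : Set V) := by rw [hU]
    _ = ↑(W₁ ⊔ W₂) := (Submodule.coe_sup W₁ W₂).symm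

theorem IsSigmaCoveringIn.finrank_sub_finrank_le_hSigma {σ : V ≃ₗ[F] V} {t : ℕ}
    {W U : Submodule F V} (hU : IsSigmaCoveringIn σ t W U) (hle : U ≤ W) :
    finrank F W - finrank F U ≤ hSigma σ t W := by
  refine le_csSup ⟨finrank F W, ?_⟩ ⟨U, hle, hU, rfl⟩
  rintro _ ⟨U', -, -, rfl⟩
  exact Nat.sub_le _ _

theorem hSigma_le_hSigma_sup {σ : V ≃ₗ[F] V} (t : ℕ) {W₁ W₂ : Submodule F V}
    [FiniteDimensional F W₁] [FiniteDimensional F W₂] (hW₂ : W₂.map (σ : V →ₗ[F] V) = W₂)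
    (h : Disjoint W₁ W₂) : hSigma σ t W₁ ≤ hSigma σ t (W₁ ⊔ W₂) := by
  refine csSup_le' ?_
  rintro _ ⟨U, hle, hU, rfl⟩
  rw [← finrank_sup_sub_finrank_sup_of_disjoint hle h]
  exact (hU.sup hW₂).finrank_sub_finrank_le_hSigma (sup_le_sup_right hle W₂)

theorem stmt1_general (σ : V ≃ₗ[F] V) (t : ℕ) {W₁ W₂ : Submodule F V}
    [FiniteDimensional F W₁] [FiniteDimensional F W₂]
    (hW₁ : ∀ x ∈ W₁, σ x ∈ W₁) (hW₂ : ∀ x ∈ W₂, σ x ∈ W₂) (h : Disjoint W₁ W₂) :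
    (∀ U₁ : Submodule F V, IsSigmaCoveringIn σ t W₁ U₁ →
      IsSigmaCoveringIn σ t (W₁ ⊔ W₂) (U₁ ⊔ W₂)) ∧
    max (hSigma σ t W₁) (hSigma σ t W₂) ≤ hSigma σ t (W₁ ⊔ W₂) := by
  refine ⟨fun U₁ hU₁ => hU₁.sup (map_eq_of_forall_mem hW₂), max_le ?_ ?_⟩
  · exact hSigma_le_hSigma_sup t (map_eq_of_forall_mem hW₂) h
  · rw [sup_comm]
    exact hSigma_le_hSigma_sup t (map_eq_of_forall_mem hW₁) h.symm

end

/-- Let `σ` be an `F`-linear automorphism of `K = 𝔽_{q^n}` of finite order `t`, and let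
`W₁, W₂` be `σ`-invariant subspaces with `K = W₁ ⊕ W₂`.  If `Ū₁ ⊆ W₁` is a `σ`-covering
subspace of `W₁`, then `Ū₁ ⊕ W₂` is a `σ`-covering subspace of `K`.  Consequently
`h_σ(K) ≥ max{h_σ(W₁), h_σ(W₂)}`. -/
theorem stmt1 (F K : Type*) [Field F] [Fintype F] [Field K] [Algebra F K]
    (n : ℕ) (hn : 0 < n) (hrank : Module.finrank F K = n)
    (σ : K ≃ₗ[F] K) (t : ℕ) (ht : 0 < t) (hord : orderOf σ = t)
    (W₁ W₂ : Submodule F K)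
    (hW₁ : ∀ x ∈ W₁, σ x ∈ W₁) (hW₂ : ∀ x ∈ W₂, σ x ∈ W₂)
    (hdisj : W₁ ⊓ W₂ = ⊥) (hsup : W₁ ⊔ W₂ = ⊤) :
    (∀ U₁ : Submodule F K, U₁ ≤ W₁ → IsSigmaCoveringIn σ t W₁ U₁ →
      IsSigmaCoveringIn σ t ⊤ (U₁ ⊔ W₂)) ∧
    max (hSigma σ t W₁) (hSigma σ t W₂) ≤ hSigma σ t ⊤ := by
  have : FiniteDimensional F K := Module.finite_of_finrank_pos (hrank ▸ hn)
  exact hsup ▸ (stmt1_general σ t hW₁ hW₂ (disjoint_iff.mpr hdisj)).imp_left fun h U₁ _ => h U₁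
end
end

section
/- Let q be a prime power, let f be an irreducible polynomial of degree d over 𝔽_q, and let ω be a root of f in 𝔽_{q^d} satisfying ω^n = 1 for a positive integer n. Then {1, ω, …, ω^{d-1}} is an 𝔽_q-basis of 𝔽_q(ω) = 𝔽_{q^d}; for 1 ≤ i ≤ n write ω^i = a_{i1} + a_{i2}ω + ⋯ + a_{id}ω^{d-1} with a_{ij} ∈ 𝔽_q. Then there exists a (d−1)-dimensional 𝔽_q-subspace U of 𝔽_{q^d} such that ⋃_{i=1}^{n} ω^i U = 𝔽_{q^d} if and only if for every tuple (x₁, …, x_d) ∈ (𝔽_q^*)^d there exists an integer i with d ≤ i ≤ n such that x₁a_{i1} + x₂a_{i2} + ⋯ + x_d a_{id} = 0. -/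
noncomputable section
open Pointwise

/-!
Fix a nonzero functional `φ` on `K`. Since `z ↦ φ (z * y)` runs over all functionals as `y` runs
over `K`, the translates of the hyperplane `ker φ` by the powers of `ω` cover `K` if and only if
every functional `ψ` vanishes at some power of `ω`; in particular this does not depend on `φ`.
In coordinates, `x j = ψ (ω ^ j)` for `j < d` is an arbitrary tuple and
`ψ (ω ^ i) = ∑ j, x j * a i j`, so only tuples without zero entries impose a condition on the
remaining powers.
-/

open Module

theorem mem_iUnion_pow_smul_iff {M α : Type*} [Monoid M] [MulAction M α] {g : M} {n : ℕ}
    (hn : 0 < n) (hg : g ^ n = 1) {s : Set α} {y : α} :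
    y ∈ ⋃ i ∈ Finset.Icc 1 n, g ^ i • s ↔ ∃ k : ℕ, g ^ k • y ∈ s := by
  simp only [Set.mem_iUnion, Finset.mem_Icc, exists_prop]
  constructor
  · rintro ⟨i, ⟨-, hin⟩, u, hu, rfl⟩
    refine ⟨n - i, ?_⟩
    rwa [smul_smul, ← pow_add, Nat.sub_add_cancel hin, hg, one_smul]
  · rintro ⟨k, hk⟩
    have hkn : k % n < n := Nat.mod_lt k hn
    refine ⟨n - k % n, by omega, Set.mem_smul_set.mpr ⟨g ^ k • y, hk, ?_⟩⟩
    rw [pow_eq_pow_mod k hg, smul_smul, ← pow_add, Nat.sub_add_cancel hkn.le, hg, one_smul]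

theorem exists_pow_iff_forall_lt_not_imp {M : Type*} [Monoid M] {g : M} {n : ℕ} (hn : 0 < n)
    (hg : g ^ n = 1) (d : ℕ) (p : M → Prop) :
    (∃ k : ℕ, p (g ^ k)) ↔
      ((∀ j < d, ¬ p (g ^ j)) → ∃ i, d ≤ i ∧ i ≤ n ∧ p (g ^ i)) := by
  constructor
  · rintro ⟨k, hk⟩ hp
    rw [pow_eq_pow_mod k hg] at hk
    exact ⟨k % n, not_lt.mp fun hlt => hp _ hlt hk, (Nat.mod_lt k hn).le, hk⟩
  · intro h
    by_contra! hp
    obtain ⟨i, -, -, hi⟩ := h fun j _ => hp j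
    exact hp i hi

theorem finrank_eq_sub_one_iff_exists_ker_eq {F V : Type*} [Field F] [AddCommGroup V] [Module F V]
    [FiniteDimensional F V] [Nontrivial V] {U : Submodule F V} :
    finrank F U = finrank F V - 1 ↔ ∃ φ : Dual F V, φ ≠ 0 ∧ LinearMap.ker φ = U := by
  have hpos : 0 < finrank F V := finrank_pos
  constructor
  · intro hU
    have hlt : U < ⊤ := lt_top_iff_ne_top.mpr fun h => by
      rw [h, finrank_top] at hU
      omega
    obtain ⟨φ, hφ, hle⟩ := U.exists_le_ker_of_lt_top hlt
    refine ⟨φ, hφ, (Submodule.eq_of_le_of_finrank_eq hle ?_).symm⟩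
    have := Dual.finrank_ker_add_one_of_ne_zero hφ
    omega
  · rintro ⟨φ, hφ, rfl⟩
    have := Dual.finrank_ker_add_one_of_ne_zero hφ
    omega

section DivisionRing

variable {F K : Type*} [Field F] [DivisionRing K] [Algebra F K] [FiniteDimensional F K]

theorem exists_forall_dual_mul_eq {φ : Dual F K} (hφ : φ ≠ 0) (ψ : Dual F K) :
    ∃ y : K, ∀ z, φ (z * y) = ψ z := by
  let T : K →ₗ[F] Dual F K := (LinearMap.mul F K).flip.compr₂ φ
  have hT : Function.Injective T := by
    refine (injective_iff_map_eq_zero T).mpr fun y hy => by_contra fun hy0 => hφ ?_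
    ext z
    simpa [T, hy0] using LinearMap.congr_fun hy (z * y⁻¹)
  obtain ⟨y, hy⟩ := (LinearMap.injective_iff_surjective_of_finrank_eq_finrank
    Subspace.dual_finrank_eq.symm).mp hT ψ
  exact ⟨y, LinearMap.congr_fun hy⟩

variable {ω : K} {n : ℕ}

theorem iUnion_pow_smul_ker_eq_univ_iff (hn : 0 < n) (hω : ω ^ n = 1) {φ : Dual F K}
    (hφ : φ ≠ 0) :
    ⋃ i ∈ Finset.Icc 1 n, ω ^ i • (LinearMap.ker φ : Set K) = Set.univ ↔
      ∀ ψ : Dual F K, ∃ k : ℕ, ψ (ω ^ k) = 0 := by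
  simp only [Set.eq_univ_iff_forall, mem_iUnion_pow_smul_iff hn hω, smul_eq_mul, SetLike.mem_coe,
    LinearMap.mem_ker]
  constructor
  · intro h ψ
    obtain ⟨y, hy⟩ := exists_forall_dual_mul_eq hφ ψ
    simpa only [hy] using h y
  · exact fun h y => h (φ ∘ₗ LinearMap.mulRight F y)

theorem exists_hyperplane_iUnion_pow_smul_eq_univ_iff (hn : 0 < n) (hω : ω ^ n = 1) :
    (∃ U : Submodule F K, finrank F U = finrank F K - 1 ∧
        ⋃ i ∈ Finset.Icc 1 n, ω ^ i • (U : Set K) = Set.univ) ↔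
      ∀ ψ : Dual F K, ∃ k : ℕ, ψ (ω ^ k) = 0 := by
  simp only [finrank_eq_sub_one_iff_exists_ker_eq]
  constructor
  · rintro ⟨_, ⟨φ, hφ, rfl⟩, hcover⟩
    exact (iUnion_pow_smul_ker_eq_univ_iff hn hω hφ).mp hcover
  · intro h
    obtain ⟨φ, hφ⟩ := exists_ne (0 : Dual F K)
    exact ⟨_, ⟨φ, hφ, rfl⟩, (iUnion_pow_smul_ker_eq_univ_iff hn hω hφ).mpr h⟩

end DivisionRing

theorem exists_powerBasis_gen_eq_of_irreducible {F K : Type*} [Field F] [Field K] [Algebra F K]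
    {f : Polynomial F} (hf : Irreducible f) (hrank : finrank F K = f.natDegree) {ω : K}
    (hω : Polynomial.aeval ω f = 0) :
    ∃ B : PowerBasis F K, B.gen = ω := by
  have hdeg : (minpoly F ω).natDegree = f.natDegree := by
    rw [← minpoly.eq_of_irreducible hf hω, Polynomial.natDegree_mul_C]
    exact inv_ne_zero (Polynomial.leadingCoeff_ne_zero.mpr hf.ne_zero)
  have hli : LinearIndependent F fun j : Fin f.natDegree => ω ^ (j : ℕ) :=
    hdeg ▸ linearIndependent_pow ω
  have : Nonempty (Fin f.natDegree) := ⟨⟨0, hf.natDegree_pos⟩⟩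
  exact ⟨⟨ω, f.natDegree, basisOfLinearIndependentOfCardEqFinrank hli (by simp [hrank]),
    by simp⟩, rfl⟩

theorem stmt2_general {F K : Type*} [Field F] [Field K] [Algebra F K] (B : PowerBasis F K)
    {n : ℕ} (hn : 0 < n) (hω : B.gen ^ n = 1) {a : ℕ → Fin B.dim → F}
    (ha : ∀ i, 1 ≤ i → i ≤ n →
      B.gen ^ i = ∑ j : Fin B.dim, algebraMap F K (a i j) * B.gen ^ (j : ℕ)) :
    (∃ U : Submodule F K, finrank F U = B.dim - 1 ∧
        (⋃ i ∈ Finset.Icc 1 n, B.gen ^ i • (U : Set K)) = Set.univ) ↔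
      ∀ x : Fin B.dim → F, (∀ j, x j ≠ 0) →
        ∃ i, B.dim ≤ i ∧ i ≤ n ∧ ∑ j : Fin B.dim, x j * a i j = 0 := by
  have : FiniteDimensional F K := B.finite
  have hcover := exists_hyperplane_iUnion_pow_smul_eq_univ_iff (F := F) hn hω
  rw [B.finrank] at hcover
  rw [hcover, ← (B.basis.constr F).toEquiv.forall_congr_right]
  refine forall_congr' fun x => ?_
  let ψ : Dual F K := B.basis.constr F x
  have hψ (j : Fin B.dim) : ψ (B.gen ^ (j : ℕ)) = x j := by
    rw [← B.basis_eq_pow, Basis.constr_basis]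
  have hψa {i : ℕ} (hi : B.dim ≤ i) (hin : i ≤ n) : ψ (B.gen ^ i) = ∑ j, x j * a i j := by
    simp only [ha i (B.dim_pos.trans_le hi) hin, ← Algebra.smul_def, map_sum, map_smul, hψ,
      smul_eq_mul, mul_comm (x _)]
  have hx : (∀ j < B.dim, ψ (B.gen ^ j) ≠ 0) ↔ ∀ j, x j ≠ 0 := by
    simp only [← hψ, Fin.forall_iff]
  refine (exists_pow_iff_forall_lt_not_imp hn hω B.dim (ψ · = 0)).trans
    (imp_congr hx (exists_congr fun i => ?_))
  exact and_congr_right fun hi => and_congr_right fun hin => by rw [hψa hi hin]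

/-- Let `f` be an irreducible polynomial of degree `d` over `F = 𝔽_q`, and let
`ω ∈ K = 𝔽_{q^d}` be a root of `f` with `ω^n = 1`.  Writing
`ω^i = a_{i1} + a_{i2}ω + ⋯ + a_{id}ω^{d-1}` for `1 ≤ i ≤ n`, there is a
`(d-1)`-dimensional `F`-subspace `U ⊆ K` with `⋃_{i=1}^{n} ω^i U = K` if and only if
for every tuple `(x₁, …, x_d)` of nonzero elements of `F` there is some `i` with
`d ≤ i ≤ n` and `x₁ a_{i1} + ⋯ + x_d a_{id} = 0`. -/
theorem stmt2 (F K : Type*) [Field F] [Fintype F] [Field K] [Algebra F K]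
    (d n : ℕ) (hd : 0 < d) (hn : 0 < n)
    (f : Polynomial F) (hf : Irreducible f) (hdeg : f.natDegree = d)
    (hrank : Module.finrank F K = d)
    (ω : K) (hω : Polynomial.aeval ω f = 0) (hωn : ω ^ n = 1)
    (a : ℕ → Fin d → F)
    (ha : ∀ i, 1 ≤ i → i ≤ n →
      ω ^ i = ∑ j : Fin d, algebraMap F K (a i j) * ω ^ (j : ℕ)) :
    (∃ U : Submodule F K, Module.finrank F U = d - 1 ∧
        (⋃ i ∈ Finset.Icc 1 n, ω ^ i • (U : Set K)) = Set.univ) ↔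
      ∀ x : Fin d → F, (∀ j, x j ≠ 0) →
        ∃ i, d ≤ i ∧ i ≤ n ∧ ∑ j : Fin d, x j * a i j = 0 := by
  obtain ⟨B, rfl⟩ := exists_powerBasis_gen_eq_of_irreducible hf (hrank.trans hdeg.symm) hω
  obtain rfl : B.dim = d := B.finrank.symm.trans hrank
  exact stmt2_general B hn hωn ha
end
end

section
/- Let p be a prime and q a power of p with q ≠ 2 and q ≠ p². Let ℓ be an odd prime and t ≥ 1 an integer such that q is a primitive root modulo ℓ^t (i.e. q generates the multiplicative group of units modulo ℓ^t). Then h_q(ℓ^t) = 0; that is, the only cyclically covering subspace of 𝔽_q^{ℓ^t} is the whole space. -/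
noncomputable section

/-- The cyclic shift operator on `Fin n → F`, sending `(a_0, …, a_{n-1})`
to `(a_{n-1}, a_0, …, a_{n-2})`. -/
def cshift (F : Type*) [Field F] (n : ℕ) : (Fin n → F) →ₗ[F] (Fin n → F) where
  toFun a := a ∘ (finRotate n).symm
  map_add' _ _ := rfl
  map_smul' _ _ := rfl

/-- A subspace `U ⊆ F^n` is cyclically covering if the union of its cyclic shifts is `F^n`. -/
def IsCyclicallyCovering {F : Type*} [Field F] {n : ℕ} (U : Submodule F (Fin n → F)) : Prop :=
  ⋃ i ∈ Finset.range n, ⇑(cshift F n ^ i) '' (U : Set (Fin n → F)) = Set.univ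

/-- `hcc F n` is the largest possible codimension of a cyclically covering subspace of `F^n`. -/
def hcc (F : Type*) [Field F] (n : ℕ) : ℕ :=
  sSup {k : ℕ | ∃ U : Submodule F (Fin n → F),
    IsCyclicallyCovering U ∧ n - Module.finrank F U = k}

/-! A proper subspace `U` lies in the kernel of a functional `φ ≠ 0`, so it suffices to find `x`
whose orbit sequence `i ↦ φ (τ ^ i x)` never vanishes. The orbit sequences form a nonzero space
which is invariant under the shift of sequences and killed by `X ^ n - 1`; hence it contains a
nonzero sequence killed by some irreducible factor `Q` of `X ^ n - 1`. The sequences killed by `Q`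
form a simple `F[X]`-module, so all of them are orbit sequences. For `n = ℓ ^ t` and `Φ_{ℓ ^ t}`
irreducible, `Q` is some `Φ_{ℓ ^ s}` up to a unit, and it kills a nowhere vanishing sequence: a
constant one if `s = 0`, and otherwise one which is constant on blocks of length `ℓ ^ (s - 1)` and
periodic of period `ℓ ^ s`, its `ℓ` block values being nonzero of sum zero. Such values exist as
soon as `F` has more than two elements. -/

open Polynomial

section Orbit

variable (R : Type*) [CommSemiring R] {M : Type*} [AddCommMonoid M] [Module R M]

/-- The left shift `(u_0, u_1, …) ↦ (u_1, u_2, …)` on sequences. The sequences killed by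
`Q(seqShift)` are the solutions of the linear recurrence with characteristic polynomial `Q`. -/
def seqShift : (ℕ → R) →ₗ[R] (ℕ → R) :=
  LinearMap.funLeft R R Nat.succ

variable {R}

@[simp]
theorem seqShift_pow_apply (k : ℕ) (u : ℕ → R) (i : ℕ) : (seqShift R ^ k) u i = u (i + k) := by
  induction k generalizing i with
  | zero => rfl
  | succ k ih =>
    rw [pow_succ', Module.End.mul_apply, seqShift, LinearMap.funLeft_apply, ← seqShift, ih,
      Nat.succ_add_eq_add_succ]

theorem aeval_seqShift_apply (Q : R[X]) (u : ℕ → R) (i : ℕ) :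
    aeval (seqShift R) Q u i = ∑ k ∈ Finset.range (Q.natDegree + 1), Q.coeff k * u (i + k) := by
  simp [aeval_eq_sum_range, LinearMap.sum_apply, Finset.sum_apply]

/-- The sequence of values of a functional `φ` along the orbit of a vector under `f`. It has
no zero term if and only if the orbit avoids the kernel of `φ`. -/
def orbitSeq (f : Module.End R M) (φ : Module.Dual R M) : M →ₗ[R] (ℕ → R) :=
  LinearMap.pi fun i => φ ∘ₗ f ^ i

@[simp]
theorem orbitSeq_apply (f : Module.End R M) (φ : Module.Dual R M) (x : M) (i : ℕ) :
    orbitSeq f φ x i = φ ((f ^ i) x) :=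
  rfl

theorem aeval_seqShift_orbitSeq (f : Module.End R M) (φ : Module.Dual R M) (p : R[X]) (x : M) :
    aeval (seqShift R) p (orbitSeq f φ x) = orbitSeq f φ (aeval f p x) := by
  have hpow (k : ℕ) : (seqShift R ^ k) (orbitSeq f φ x) = orbitSeq f φ ((f ^ k) x) := by
    ext i
    simp [pow_add]
  simp only [aeval_eq_sum_range, LinearMap.sum_apply, LinearMap.smul_apply, map_sum, map_smul, hpow]

end Orbit

theorem eq_zero_of_aeval_seqShift_eq_zero {R : Type*} [CommRing R] [IsDomain R] {Q : R[X]}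
    (hQ : Q ≠ 0) {u : ℕ → R} (hu : aeval (seqShift R) Q u = 0)
    (hinit : ∀ i < Q.natDegree, u i = 0) : u = 0 := by
  ext i
  induction i using Nat.strong_induction_on with
  | _ i ih =>
    rcases lt_or_ge i Q.natDegree with hi | hi
    · exact hinit i hi
    · obtain ⟨j, rfl⟩ := Nat.exists_eq_add_of_le' hi
      have hrec := congr_fun hu j
      have hlower : ∑ k ∈ Finset.range Q.natDegree, Q.coeff k * u (j + k) = 0 :=
        Finset.sum_eq_zero fun k hk => by
          rw [ih (j + k) (Nat.add_lt_add_left (Finset.mem_range.1 hk) j), Pi.zero_apply, mul_zero]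
      rw [aeval_seqShift_apply, Finset.sum_range_succ, hlower, zero_add] at hrec
      exact (mul_eq_zero.1 hrec).resolve_left (leadingCoeff_ne_zero.2 hQ)

section Field

variable {F : Type*} [Field F]

theorem exists_irreducible_dvd_aeval_eq_zero {V : Type*} [AddCommGroup V] [Module F V]
    (f : Module.End F V) {P : F[X]} (hP : P ≠ 0) {w : V} (hw : w ≠ 0) (hPw : aeval f P w = 0) :
    ∃ Q g : F[X], Irreducible Q ∧ Q ∣ P ∧ aeval f g w ≠ 0 ∧ aeval f Q (aeval f g w) = 0 := by
  induction P using WfDvdMonoid.induction_on_irreducible with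
  | zero => exact absurd rfl hP
  | unit P hunit =>
    have hinj := ((Module.End.isUnit_iff _).1 (hunit.map (aeval f))).injective
    exact absurd ((map_eq_zero_iff _ hinj).1 hPw) hw
  | mul P Q hP0 hQ ih =>
    by_cases hPw0 : aeval f P w = 0
    · obtain ⟨Q', g, hQ', hdvd, hg⟩ := ih hP0 hPw0
      exact ⟨Q', g, hQ', hdvd.mul_left Q, hg⟩
    · exact ⟨Q, P, hQ, dvd_mul_right Q P, hPw0, by rwa [map_mul, Module.End.mul_apply] at hPw⟩

-- The first `natDegree Q` values of `p(seqShift) w` depend injectively on `p` of degree less than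
-- `natDegree Q`, so by equality of dimensions they can be prescribed; they determine the sequence.
theorem exists_aeval_seqShift_eq {Q : F[X]} (hQ : Irreducible Q) {w u : ℕ → F} (hw : w ≠ 0)
    (hQw : aeval (seqShift F) Q w = 0) (hQu : aeval (seqShift F) Q u = 0) :
    ∃ p : F[X], aeval (seqShift F) p w = u := by
  have hQp (p : F[X]) : aeval (seqShift F) Q (aeval (seqShift F) p w) = 0 := by
    rw [← Module.End.mul_apply, ← map_mul, mul_comm, map_mul, Module.End.mul_apply, hQw, map_zero]
  let initialValues : degreeLT F Q.natDegree →ₗ[F] (Fin Q.natDegree → F) :=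
    LinearMap.funLeft F F Fin.val ∘ₗ LinearMap.applyₗ w ∘ₗ (aeval (seqShift F)).toLinearMap ∘ₗ
      (degreeLT F Q.natDegree).subtype
  have hinj : Function.Injective initialValues := by
    rw [injective_iff_map_eq_zero]
    rintro ⟨p, hp⟩ hp0
    have hpw : aeval (seqShift F) p w = 0 :=
      eq_zero_of_aeval_seqShift_eq_zero hQ.ne_zero (hQp p) fun i hi => congr_fun hp0 ⟨i, hi⟩
    by_contra hne
    have hndvd : ¬Q ∣ p := fun hdvd =>
      (degree_le_of_dvd hdvd fun h => hne (Subtype.ext h)).not_gt <| by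
        rwa [degree_eq_natDegree hQ.ne_zero, ← mem_degreeLT]
    have hdisj := disjoint_ker_aeval_of_isCoprime (seqShift F) (hQ.coprime_iff_not_dvd.2 hndvd)
    exact hw (Submodule.disjoint_def.1 hdisj w hQw hpw)
  have hsurj : Function.Surjective initialValues :=
    (LinearMap.injective_iff_surjective_of_finrank_eq_finrank
      (degreeLTEquiv F Q.natDegree).finrank_eq).1 hinj
  obtain ⟨⟨p, _⟩, hp⟩ := hsurj (u ∘ Fin.val)
  refine ⟨p, sub_eq_zero.1 (eq_zero_of_aeval_seqShift_eq_zero hQ.ne_zero ?_ fun i hi => ?_)⟩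
  · rw [map_sub, hQp, hQu, sub_zero]
  · exact sub_eq_zero.2 (congr_fun hp ⟨i, hi⟩)

end Field

section CyclicShift

variable {F : Type*} [Field F] {n : ℕ}

theorem finRotate_pow_self (n : ℕ) : finRotate n ^ n = 1 := by
  match n with
  | 0 | 1 => exact Subsingleton.elim _ _
  | m + 2 =>
    have horder : orderOf (finRotate (m + 2)) = m + 2 := by
      rw [isCycle_finRotate.orderOf, support_finRotate, Finset.card_univ, Fintype.card_fin]
    exact orderOf_dvd_iff_pow_eq_one.1 horder.dvd

theorem cshift_pow_apply (k : ℕ) (x : Fin n → F) :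
    (cshift F n ^ k) x = x ∘ (finRotate n ^ k).symm := by
  induction k with
  | zero => rfl
  | succ k ih => rw [pow_succ', pow_succ', Module.End.mul_apply, ih]; rfl

theorem cshift_pow_self (F : Type*) [Field F] (n : ℕ) : cshift F n ^ n = 1 :=
  LinearMap.ext fun x => by rw [cshift_pow_apply, finRotate_pow_self]; rfl

namespace IsCyclicallyCovering

variable {U : Submodule F (Fin n → F)}

theorem exists_cshift_pow_mem (hU : IsCyclicallyCovering U) (x : Fin n → F) :
    ∃ k, (cshift F n ^ k) x ∈ U := by
  have hx : x ∈ ⋃ i ∈ Finset.range n, ⇑(cshift F n ^ i) '' (U : Set (Fin n → F)) :=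
    Set.eq_univ_iff_forall.1 hU x
  simp only [Set.mem_iUnion, Finset.mem_range] at hx
  obtain ⟨i, hi, u, hu, rfl⟩ := hx
  refine ⟨n - i, ?_⟩
  rwa [← Module.End.mul_apply, ← pow_add, Nat.sub_add_cancel hi.le, cshift_pow_self]

theorem eq_top_of_exists_aeval_seqShift_eq_zero (hU : IsCyclicallyCovering U) (hn : 0 < n)
    (hseq : ∀ Q : F[X], Irreducible Q → Q ∣ X ^ n - 1 →
      ∃ u : ℕ → F, (∀ i, u i ≠ 0) ∧ aeval (seqShift F) Q u = 0) : U = ⊤ := by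
  by_contra hne
  obtain ⟨φ, hφ0, hφU⟩ := Submodule.exists_le_ker_of_lt_top U (lt_top_iff_ne_top.2 hne)
  obtain ⟨y, hy⟩ := DFunLike.ne_iff.1 hφ0
  let w : ℕ → F := orbitSeq (cshift F n) φ y
  have hw : w ≠ 0 := fun h => hy (congr_fun h 0)
  have hXw : aeval (seqShift F) (X ^ n - 1 : F[X]) w = 0 := by
    rw [aeval_seqShift_orbitSeq, map_sub, map_pow, aeval_X, cshift_pow_self, map_one, sub_self,
      LinearMap.zero_apply, map_zero]
  obtain ⟨Q, g, hQ, hQX, hgw, hQgw⟩ :=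
    exists_irreducible_dvd_aeval_eq_zero (seqShift F) (X_pow_sub_C_ne_zero hn 1) hw hXw
  obtain ⟨u, hu, hQu⟩ := hseq Q hQ hQX
  obtain ⟨p, hp⟩ := exists_aeval_seqShift_eq hQ hgw hQgw hQu
  rw [aeval_seqShift_orbitSeq, aeval_seqShift_orbitSeq] at hp
  obtain ⟨k, hk⟩ := hU.exists_cshift_pow_mem (aeval (cshift F n) p (aeval (cshift F n) g y))
  exact hu k (hp ▸ hφU hk)

end IsCyclicallyCovering

theorem hcc_eq_zero (h : ∀ U : Submodule F (Fin n → F), IsCyclicallyCovering U → U = ⊤) :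
    hcc F n = 0 := by
  refine Nat.le_zero.1 (csSup_le' ?_)
  rintro k ⟨U, hU, rfl⟩
  rw [h U hU, finrank_top, Module.finrank_fin_fun, Nat.sub_self]

end CyclicShift

section NowhereZero

theorem exists_ne_zero_ne {G : Type*} [Zero G] [Nontrivial G] (hG : Nat.card G ≠ 2) (v : G) :
    ∃ x : G, x ≠ 0 ∧ x ≠ v := by
  by_contra! h
  obtain ⟨y, hy⟩ := exists_ne (0 : G)
  exact hG ((Nat.card_eq_two_iff' 0).2 ⟨y, hy, fun z hz => (h z hz).trans (h y hy).symm⟩)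

theorem exists_forall_ne_zero_sum_eq_zero {ι G : Type*} [Fintype ι] [Nontrivial ι]
    [AddCommGroup G] [Nontrivial G] (hG : Nat.card G ≠ 2) :
    ∃ c : ι → G, (∀ i, c i ≠ 0) ∧ ∑ i, c i = 0 := by
  classical
  obtain ⟨i, j, hij⟩ := exists_pair_ne ι
  obtain ⟨a, ha⟩ := exists_ne (0 : G)
  let r : G := ∑ _k ∈ (Finset.univ \ {i}) \ {j}, a
  obtain ⟨x, hx0, hxr⟩ := exists_ne_zero_ne hG (-r)
  refine ⟨Function.update (Function.update (fun _ => a) j (-r - x)) i x, fun k => ?_, ?_⟩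
  · simp only [Function.update_apply]
    split_ifs
    exacts [hx0, sub_ne_zero.2 hxr.symm, ha]
  · rw [Finset.sum_update_of_mem (Finset.mem_univ i),
      Finset.sum_update_of_mem (by simpa using hij.symm)]
    change x + (-r - x + r) = 0
    abel

theorem sum_range_add_natCast {A : Type*} [AddCommMonoid A] {l : ℕ} [NeZero l] (c : ZMod l → A)
    (z : ZMod l) : ∑ j ∈ Finset.range l, c (z + j) = ∑ x, c x :=
  Finset.sum_bij' (fun j _ => z + (j : ZMod l)) (fun x _ => (x - z).val)
    (fun _ _ => Finset.mem_univ _) (fun x _ => Finset.mem_range.2 (ZMod.val_lt _))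
    (fun j hj => by rw [add_sub_cancel_left, ZMod.val_cast_of_lt (Finset.mem_range.1 hj)])
    (fun x _ => by rw [ZMod.natCast_zmod_val, add_sub_cancel]) (fun _ _ => rfl)

theorem aeval_seqShift_geom_sum_eq_zero {R : Type*} [CommSemiring R] {l m : ℕ} [NeZero l]
    (hm : 0 < m) {c : ZMod l → R} (hc : ∑ x, c x = 0) :
    aeval (seqShift R) (∑ j ∈ Finset.range l, (X ^ m) ^ j : R[X])
      (fun i => c ((i / m : ℕ) : ZMod l)) = 0 := by
  ext i
  simp [LinearMap.sum_apply, Finset.sum_apply, ← pow_mul, Nat.add_mul_div_left _ _ hm,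
    sum_range_add_natCast, hc]

theorem exists_aeval_seqShift_cyclotomic_prime_pow_eq_zero {F : Type*} [Field F]
    (hF : Nat.card F ≠ 2) {l : ℕ} (hl : l.Prime) (s : ℕ) :
    ∃ u : ℕ → F, (∀ i, u i ≠ 0) ∧ aeval (seqShift F) (cyclotomic (l ^ s) F) u = 0 := by
  cases s with
  | zero =>
    refine ⟨1, fun _ => one_ne_zero, ?_⟩
    ext i
    simpa using sub_eq_zero.2 (seqShift_pow_apply 1 (1 : ℕ → F) i)
  | succ s =>
    have : Fact l.Prime := ⟨hl⟩
    obtain ⟨c, hc0, hc⟩ := exists_forall_ne_zero_sum_eq_zero (ι := ZMod l) hF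
    refine ⟨fun i => c ((i / l ^ s : ℕ) : ZMod l), fun i => hc0 _, ?_⟩
    rw [cyclotomic_prime_pow_eq_geom_sum hl]
    exact aeval_seqShift_geom_sum_eq_zero (pow_pos hl.pos s) hc

end NowhereZero

section Cyclotomic

theorem exists_cyclotomic_prime_pow_dvd_of_dvd_X_pow_sub_one {F : Type*} [Field F] {l t : ℕ}
    (hl : l.Prime) (hirr : Irreducible (cyclotomic (l ^ t) F)) {Q : F[X]}
    (hQ : Irreducible Q) (hdvd : Q ∣ X ^ l ^ t - 1) : ∃ s, cyclotomic (l ^ s) F ∣ Q := by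
  rw [← prod_cyclotomic_eq_X_pow_sub_one (pow_pos hl.pos t), hQ.prime.dvd_finsetProd_iff] at hdvd
  obtain ⟨d, hd, hQd⟩ := hdvd
  obtain ⟨s, hs, rfl⟩ := (Nat.dvd_prime_pow hl).1 (Nat.dvd_of_mem_divisors hd)
  have hirr' := cyclotomic_irreducible_pow_of_irreducible_pow hl hs hirr
  exact ⟨s, (hQ.associated_of_dvd hirr' hQd).dvd'⟩

theorem irreducible_cyclotomic_of_orderOf_card {F : Type*} [Field F] [Fintype F] {n : ℕ}
    (hn : 0 < n) (horder : orderOf (Fintype.card F : ZMod n) = n.totient) :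
    Irreducible (cyclotomic n F) := by
  obtain ⟨p, _⟩ := CharP.exists F
  obtain ⟨e, hp, hcard⟩ := FiniteField.card F p
  have : Fact p.Prime := ⟨hp⟩
  have hunit : IsUnit ((Fintype.card F : ℕ) : ZMod n) :=
    (orderOf_pos_iff.1 (horder ▸ Nat.totient_pos.2 hn)).isUnit
  have hcop : p.Coprime n := by
    rwa [ZMod.isUnit_iff_coprime, hcard, Nat.coprime_pow_left_iff e.pos] at hunit
  refine irreducible_of_dvd_cyclotomic_of_natDegree hcard hcop dvd_rfl ?_
  rw [natDegree_cyclotomic, ← horder, ← orderOf_units, ZMod.coe_unitOfCoprime, hcard]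

end Cyclotomic

theorem stmt3_general (F : Type*) [Field F] (hF : Nat.card F ≠ 2) (l : ℕ) (hl : l.Prime) (t : ℕ)
    (hirr : Irreducible (cyclotomic (l ^ t) F)) :
    hcc F (l ^ t) = 0 ∧
      ∀ U : Submodule F (Fin (l ^ t) → F), IsCyclicallyCovering U → U = ⊤ := by
  have htop (U : Submodule F (Fin (l ^ t) → F)) (hU : IsCyclicallyCovering U) : U = ⊤ := by
    refine hU.eq_top_of_exists_aeval_seqShift_eq_zero (pow_pos hl.pos t) fun Q hQ hdvd => ?_
    obtain ⟨s, g, rfl⟩ := exists_cyclotomic_prime_pow_dvd_of_dvd_X_pow_sub_one hl hirr hQ hdvd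
    obtain ⟨u, hu, hcu⟩ := exists_aeval_seqShift_cyclotomic_prime_pow_eq_zero hF hl s
    refine ⟨u, hu, ?_⟩
    rw [mul_comm, map_mul, Module.End.mul_apply, hcu, map_zero]
  exact ⟨hcc_eq_zero htop, htop⟩

/-- Let `q` be a power of a prime `p` with `q ≠ 2` and `q ≠ p²`, and let `ℓ` be an odd
prime such that `q` is a primitive root modulo `ℓ^t` (`t ≥ 1`).  Then `h_q(ℓ^t) = 0`,
i.e. the only cyclically covering subspace of `𝔽_q^{ℓ^t}` is the whole space. -/
theorem stmt3 (F : Type*) [Field F] [Fintype F]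
    (p : ℕ) (hp : p.Prime) (e : ℕ) (he : 0 < e)
    (hcard : Fintype.card F = p ^ e)
    (hq2 : Fintype.card F ≠ 2) (hqp2 : Fintype.card F ≠ p ^ 2)
    (ℓ : ℕ) (hl : ℓ.Prime) (hlodd : Odd ℓ) (t : ℕ) (ht : 1 ≤ t)
    (hprim : orderOf ((Fintype.card F : ℕ) : ZMod (ℓ ^ t)) = (ℓ ^ t).totient) :
    hcc F (ℓ ^ t) = 0 ∧
      ∀ U : Submodule F (Fin (ℓ ^ t) → F), IsCyclicallyCovering U → U = ⊤ :=
  stmt3_general F (Nat.card_eq_fintype_card (α := F) ▸ hq2) ℓ hl t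
    (irreducible_cyclotomic_of_orderOf_card (pow_pos hl.pos t) hprim)
end
end

section
/- Let q be a prime power, n a positive integer, and let σ : 𝔽_{q^n} → 𝔽_{q^n} be the Frobenius automorphism σ(x) = x^q. For α ∈ 𝔽_{q^n}, let V_α = {x ∈ 𝔽_{q^n} : Tr(αx) = 0}, where Tr denotes the trace from 𝔽_{q^n} to 𝔽_q. If the elements α, σ(α), …, σ^{n-1}(α) are linearly independent over 𝔽_q, then V_α is not a cyclically covering subspace of 𝔽_{q^n}, i.e. ⋃_{i=0}^{n-1} σ^i(V_α) ≠ 𝔽_{q^n}. -/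
noncomputable section

/-!
Choose `y` with `Tr(σⁱ(α) y) = 1` for all `i`, which is possible because the `σⁱ(α)` are linearly
independent and the trace form is nondegenerate. As `σⁱ` preserves the trace form, `σⁱ(V_α)` lies in
the kernel of `x ↦ Tr(σⁱ(α) x)`, so no `σⁱ(V_α)` contains `y`.
-/

theorem biUnion_finset_range_eq_iUnion_fin {X : Type*} (s : ℕ → Set X) (n : ℕ) :
    ⋃ i ∈ Finset.range n, s i = ⋃ i : Fin n, s i := by
  ext
  simp [Fin.exists_iff]

section BilinForm

variable {F V W ι : Type*} [Field F] [AddCommGroup V] [Module F V] [AddCommGroup W] [Module F W]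

theorem exists_dual_apply_eq_of_linearIndependent {v : ι → V} (hv : LinearIndependent F v)
    (c : ι → F) : ∃ f : Module.Dual F V, ∀ i, f (v i) = c i := by
  obtain ⟨coord, hcoord⟩ :=
    (Finsupp.linearCombination F v).exists_leftInverse_of_injective
      (LinearMap.ker_eq_bot.mpr hv)
  have coord_apply (i : ι) : coord (v i) = Finsupp.single i 1 := by
    simpa using LinearMap.congr_fun hcoord (Finsupp.single i 1)
  exact ⟨Finsupp.linearCombination F c ∘ₗ coord, fun i => by simp [coord_apply]⟩

variable [FiniteDimensional F V] {B : LinearMap.BilinForm F V}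

theorem exists_bilinForm_apply_eq_of_linearIndependent (hB : B.Nondegenerate) {v : ι → V}
    (hv : LinearIndependent F v) (c : ι → F) : ∃ y, ∀ i, B (v i) y = c i := by
  obtain ⟨f, hf⟩ := exists_dual_apply_eq_of_linearIndependent hv c
  refine ⟨(B.flip.toDual hB.flip).symm f, fun i => ?_⟩
  rw [← hf i, ← LinearMap.BilinForm.flip_apply, LinearMap.BilinForm.apply_toDual_symm_apply]

theorem iUnion_isometry_image_ne_univ {B' : LinearMap.BilinForm F W} (hB : B.Nondegenerate)
    (σ : ι → B' →bᵢ B) {w : W} (hw : LinearIndependent F fun i => σ i w) :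
    (⋃ i, σ i '' {x | B' w x = 0}) ≠ Set.univ := by
  obtain ⟨y, hy⟩ := exists_bilinForm_apply_eq_of_linearIndependent hB hw fun _ => 1
  refine (Set.ne_univ_iff_exists_notMem _).mpr ⟨y, fun hmem => ?_⟩
  obtain ⟨i, x, hx, rfl⟩ := Set.mem_iUnion.mp hmem
  exact zero_ne_one <| calc
    0 = B' w x := hx.symm
    _ = B (σ i w) (σ i x) := ((σ i).map_app w x).symm
    _ = 1 := hy i

end BilinForm

/-- An isomorphism of commutative algebras, regarded as an isometry of their trace forms. -/
def traceFormIsometry {R A A' : Type*} [CommRing R] [CommRing A] [CommRing A'] [Algebra R A]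
    [Algebra R A'] (e : A ≃ₐ[R] A') : Algebra.traceForm R A →bᵢ Algebra.traceForm R A' where
  __ := e.toLinearMap
  map_app' x y := by
    change Algebra.trace R A' (e x * e y) = Algebra.trace R A (x * y)
    rw [← map_mul, Algebra.trace_eq_of_algEquiv]

theorem stmt4_general {F A ι : Type*} [Field F] [CommRing A] [Algebra F A] [FiniteDimensional F A]
    (hA : (Algebra.traceForm F A).Nondegenerate) (σ : ι → A ≃ₐ[F] A) (α : A)
    (hlin : LinearIndependent F fun i => σ i α) :
    (⋃ i, σ i '' {x | Algebra.trace F A (α * x) = 0}) ≠ Set.univ :=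
  iUnion_isometry_image_ne_univ hA (fun i => traceFormIsometry (σ i)) hlin

/-- Let `σ : K → K`, `σ(x) = x^q`, be the Frobenius of `K = 𝔽_{q^n}` over `F = 𝔽_q`, and
for `α ∈ K` let `V_α = {x ∈ K : Tr(αx) = 0}`.  If `α, σ(α), …, σ^{n-1}(α)` are linearly
independent over `F`, then `V_α` is not a cyclically covering subspace of `K`, i.e.
`⋃_{i=0}^{n-1} σ^i(V_α) ≠ K`. -/
theorem stmt4 (F K : Type*) [Field F] [Fintype F] [Field K] [Algebra F K]
    (n : ℕ) (hn : 0 < n) (hrank : Module.finrank F K = n)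
    (σ : K → K) (hσ : ∀ x, σ x = x ^ Fintype.card F)
    (α : K)
    (hlin : LinearIndependent F (fun i : Fin n => σ^[i] α)) :
    (⋃ i ∈ Finset.range n, σ^[i] '' {x : K | Algebra.trace F K (α * x) = 0})
      ≠ Set.univ := by
  have : FiniteDimensional F K := .of_finrank_pos (hrank ▸ hn)
  obtain rfl : σ = FiniteField.frobeniusAlgEquivOfAlgebraic F K := funext hσ
  simp only [← AlgEquiv.coe_pow, biUnion_finset_range_eq_iUnion_fin] at hlin ⊢
  exact stmt4_general (traceForm_nondegenerate F K) _ α hlin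
end
end

section
/- Let q be a prime power, n a positive integer, σ : 𝔽_{q^n} → 𝔽_{q^n} the Frobenius automorphism σ(x) = x^q, and α ∈ 𝔽_{q^n}. Suppose α, σ(α), …, σ^{t-1}(α) is a maximal 𝔽_q-linearly independent subset of {α, σ(α), …, σ^{n-1}(α)}, and for t ≤ i ≤ n−1 write σ^i(α) = k_{i1}α + k_{i2}σ(α) + ⋯ + k_{it}σ^{t-1}(α) with k_{ij} ∈ 𝔽_q. Then V_α is a cyclically covering subspace of 𝔽_{q^n} if and only if for every tuple (x₁, …, x_t) ∈ (𝔽_q^*)^t there exists an integer i with t ≤ i ≤ n−1 such that k_{i1}x₁ + k_{i2}x₂ + ⋯ + k_{it}x_t = 0. -/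
noncomputable section

/-!
Since `σ` preserves the trace, `σ^i(V_α)` is the kernel of the functional
`f_i : x ↦ Tr(σ^i(α) x)`, so `V_α` is cyclically covering iff at every point one of the `f_i`
vanishes. The trace form is nondegenerate, hence `f_0, …, f_{t-1}` are linearly independent and take
arbitrary values `(x₁, …, x_t)` simultaneously; the values of the remaining `f_i` are then
`k_{i1}x₁ + ⋯ + k_{it}x_t`. Where some `x_j` is zero, `f_{j-1}` already vanishes.
-/

section Functionals

variable {F V κ : Type*} [Field F] [AddCommGroup V] [Module F V]

theorem pi_surjective_of_linearIndependent [Finite κ] {f : κ → Module.Dual F V}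
    (hf : LinearIndependent F f) : Function.Surjective (LinearMap.pi f) := by
  classical
  cases nonempty_fintype κ
  rw [← LinearMap.dualMap_injective_iff, injective_iff_map_eq_zero]
  intro φ hφ
  have hsum : ∑ j, φ (fun i => if j = i then 1 else 0) • f j = 0 := by
    ext v
    have hv : φ (fun j => f j v) = 0 := LinearMap.congr_fun hφ v
    rw [LinearMap.pi_apply_eq_sum_univ] at hv
    simpa [mul_comm] using hv
  have hcoeff := Fintype.linearIndependent_iff.mp hf _ hsum
  refine LinearMap.ext fun v => ?_
  simp only [LinearMap.pi_apply_eq_sum_univ φ v, hcoeff, smul_zero, Finset.sum_const_zero,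
    LinearMap.zero_apply]

theorem forall_exists_apply_eq_zero_iff {ι : Type*} [Fintype κ]
    {f : κ → Module.Dual F V} (hf : LinearIndependent F f) {g : ι → Module.Dual F V} {s : Set ι}
    {k : ι → κ → F} (hg : ∀ i ∈ s, g i = ∑ j, k i j • f j) :
    (∀ v, (∀ j, f j v ≠ 0) → ∃ i ∈ s, g i v = 0) ↔
      ∀ x : κ → F, (∀ j, x j ≠ 0) → ∃ i ∈ s, ∑ j, k i j * x j = 0 := by
  have hgv : ∀ v, ∀ i ∈ s, g i v = ∑ j, k i j * f j v := fun v i hi => by simp [hg i hi]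
  rw [(pi_surjective_of_linearIndependent hf).forall]
  refine forall_congr' fun v => imp_congr_right fun _ => exists_congr fun i =>
    and_congr_right fun hi => ?_
  rw [hgv v i hi]
  rfl

end Functionals

section InvariantPairing

variable {X Z : Type*} {B : X → X → Z} {σ : X → X}

theorem apply_iterate_iterate (hB : ∀ x y, B (σ x) (σ y) = B x y) (i : ℕ) (x y : X) :
    B (σ^[i] x) (σ^[i] y) = B x y := by
  induction i generalizing x y with
  | zero => rfl
  | succ i ih => rw [Function.iterate_succ_apply, Function.iterate_succ_apply, ih, hB]

theorem image_fiber_eq_fiber (hσ : Function.Surjective σ) (hB : ∀ x y, B (σ x) (σ y) = B x y)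
    (a : X) (c : Z) : σ '' {x | B a x = c} = {y | B (σ a) y = c} := by
  have hpre : {x | B a x = c} = σ ⁻¹' {y | B (σ a) y = c} := by
    simp only [Set.preimage_ofPred_eq, hB]
  rw [hpre, Set.image_preimage_eq _ hσ]

end InvariantPairing

theorem biUnion_range_eq_univ_iff {X : Type*} {A : ℕ → Set X} {t n : ℕ} (htn : t ≤ n) :
    (⋃ i ∈ Finset.range n, A i) = Set.univ ↔
      ∀ x, (∀ j : Fin t, x ∉ A j) → ∃ i ∈ Set.Ico t n, x ∈ A i := by
  simp only [Set.eq_univ_iff_forall, Set.mem_iUnion, Finset.mem_range, exists_prop, Set.mem_Ico]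
  refine forall_congr' fun x => ⟨?_, fun h => ?_⟩
  · rintro ⟨i, hin, hi⟩ hx
    exact ⟨i, ⟨not_lt.mp fun hit => hx ⟨i, hit⟩ hi, hin⟩, hi⟩
  · by_cases hx : ∃ j : Fin t, x ∈ A j
    · obtain ⟨j, hj⟩ := hx
      exact ⟨j, j.isLt.trans_le htn, hj⟩
    · obtain ⟨i, ⟨-, hin⟩, hi⟩ := h (not_exists.mp hx)
      exact ⟨i, hin, hi⟩

theorem biUnion_image_iterate_orthogonal_eq_univ_iff {F V : Type*} [Field F] [AddCommGroup V]
    [Module F V] {B : LinearMap.BilinForm F V} (hker : LinearMap.ker B = ⊥) {σ : V → V}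
    (hσ : Function.Surjective σ) (hB : ∀ x y, B (σ x) (σ y) = B x y) {α : V} {t n : ℕ}
    (htn : t ≤ n) (hlin : LinearIndependent F fun j : Fin t => σ^[j] α) {k : ℕ → Fin t → F}
    (hk : ∀ i ∈ Set.Ico t n, σ^[i] α = ∑ j, k i j • σ^[j] α) :
    (⋃ i ∈ Finset.range n, σ^[i] '' {x | B α x = 0}) = Set.univ ↔
      ∀ x : Fin t → F, (∀ j, x j ≠ 0) → ∃ i ∈ Set.Ico t n, ∑ j, k i j * x j = 0 := by
  have himage (i : ℕ) : σ^[i] '' {x | B α x = 0} = {y | B (σ^[i] α) y = 0} :=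
    image_fiber_eq_fiber (B := fun x y => B x y) (hσ.iterate i)
      (apply_iterate_iterate (B := fun x y => B x y) hB i) α 0
  have hg : ∀ i ∈ Set.Ico t n, B (σ^[i] α) = ∑ j, k i j • B (σ^[j] α) := fun i hi => by
    simp only [hk i hi, map_sum, map_smul]
  simp only [himage]
  rw [biUnion_range_eq_univ_iff htn]
  exact forall_exists_apply_eq_zero_iff (hlin.map' B hker) hg

theorem stmt5_general {F K : Type*} [Field F] [CommRing K] [Algebra F K]
    (hK : (Algebra.traceForm F K).Nondegenerate) (σ : K ≃ₐ[F] K) (α : K) {t n : ℕ} (htn : t ≤ n)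
    (hlin : LinearIndependent F fun j : Fin t => σ^[j] α) (k : ℕ → Fin t → F)
    (hk : ∀ i, t ≤ i → i < n → σ^[i] α = ∑ j : Fin t, k i j • σ^[j] α) :
    (⋃ i ∈ Finset.range n, σ^[i] '' {x : K | Algebra.trace F K (α * x) = 0}) = Set.univ ↔
      ∀ x : Fin t → F, (∀ j, x j ≠ 0) →
        ∃ i, t ≤ i ∧ i < n ∧ ∑ j : Fin t, k i j * x j = 0 := by
  have htrace (x y : K) : Algebra.traceForm F K (σ x) (σ y) = Algebra.traceForm F K x y := by
    rw [Algebra.traceForm_apply, ← map_mul, Algebra.trace_eq_of_algEquiv, Algebra.traceForm_apply]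
  simpa only [Algebra.traceForm_apply, Set.mem_Ico, and_assoc] using
    biUnion_image_iterate_orthogonal_eq_univ_iff hK.ker_eq_bot σ.surjective htrace htn hlin
      fun i hi => hk i hi.1 hi.2

/-- Let `σ : K → K`, `σ(x) = x^q`, be the Frobenius of `K = 𝔽_{q^n}` over `F = 𝔽_q`,
`α ∈ K`, and let `α, σ(α), …, σ^{t-1}(α)` be a maximal `F`-linearly independent subset of
`{α, σ(α), …, σ^{n-1}(α)}`, with `σ^i(α) = k_{i1}α + ⋯ + k_{it}σ^{t-1}(α)` for
`t ≤ i ≤ n-1`.  Then `V_α = {x : Tr(αx) = 0}` is cyclically covering iff for every tuple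
`(x₁, …, x_t)` of nonzero elements of `F` there is an `i` with `t ≤ i ≤ n-1` and
`k_{i1}x₁ + ⋯ + k_{it}x_t = 0`. -/
theorem stmt5 (F K : Type*) [Field F] [Fintype F] [Field K] [Algebra F K]
    (n : ℕ) (hn : 0 < n) (hrank : Module.finrank F K = n)
    (σ : K → K) (hσ : ∀ x, σ x = x ^ Fintype.card F)
    (α : K) (t : ℕ) (ht : 0 < t) (htn : t ≤ n)
    (hlin : LinearIndependent F (fun j : Fin t => σ^[j] α))
    (k : ℕ → Fin t → F)
    (hk : ∀ i, t ≤ i → i ≤ n - 1 →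
      σ^[i] α = ∑ j : Fin t, k i j • σ^[j] α) :
    (⋃ i ∈ Finset.range n, σ^[i] '' {x : K | Algebra.trace F K (α * x) = 0})
        = Set.univ ↔
      ∀ x : Fin t → F, (∀ j, x j ≠ 0) →
        ∃ i, t ≤ i ∧ i ≤ n - 1 ∧ ∑ j : Fin t, k i j * x j = 0 := by
  have : FiniteDimensional F K := FiniteDimensional.of_finrank_pos (hrank ▸ hn)
  obtain rfl : σ = FiniteField.frobeniusAlgEquivOfAlgebraic F K := funext hσ
  simp only [Nat.le_sub_one_iff_lt hn] at hk ⊢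
  exact stmt5_general (traceForm_nondegenerate F K) _ α htn hlin k hk
end
end

section
/- Let q be a prime power and let t, n, N be positive integers satisfying nN = q^t − 1. Let g be a generator of the multiplicative group 𝔽_{q^t}^* and set ω = g^N (so that ω^n = 1). If the integers ((q^t − 1)/(q − 1))·i + N·j, for 0 ≤ i ≤ q − 2 and 0 ≤ j ≤ n − 1, form a complete residue system modulo q^t − 1, then 𝔽_{q^t} = ⋃_{j=0}^{n-1} ω^j · 𝔽_q; that is, the one-dimensional 𝔽_q-subspace 𝔽_q ⊆ 𝔽_{q^t} covers all of 𝔽_{q^t} under multiplication by the powers of ω. -/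
noncomputable section
open Pointwise

/-!
With `q = |F|`, the exponent `(q ^ t - 1) / (q - 1)` is the one of the norm `K → F`, so a factor
`g ^ ((q ^ t - 1) / (q - 1) * i)` is the norm of `g ^ i` and lies in `F`. Since the exponents
`(q ^ t - 1) / (q - 1) * i + N * j` meet every class modulo `q ^ t - 1 = |Kˣ|`, every nonzero
element of `K` is an element of `F` times `ω ^ j = g ^ (N * j)`.
-/

theorem exists_pow_eq_of_surjective_natCast {G ι : Type*} [Group G] {g : G} {m : ℕ}
    (hg : ∀ x : G, x ∈ Subgroup.zpowers g) (hgm : g ^ m = 1) {f : ι → ℕ}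
    (hf : Function.Surjective fun i ↦ (f i : ZMod m)) (x : G) : ∃ i, g ^ f i = x := by
  obtain ⟨k, rfl⟩ := Subgroup.mem_zpowers_iff.mp (hg x)
  obtain ⟨i, hi⟩ := hf k
  have hmod : (f i : ℤ) ≡ k [ZMOD m] := (ZMod.intCast_eq_intCast_iff _ _ _).mp (mod_cast hi)
  have horder : (orderOf g : ℤ) ∣ m := Int.natCast_dvd_natCast.mpr (orderOf_dvd_of_pow_eq_one hgm)
  exact ⟨i, by rw [← zpow_natCast, zpow_eq_zpow_iff_modEq]; exact hmod.of_dvd horder⟩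

section FiniteField

variable {F K : Type*} [Field F] [Fintype F] [Field K] [Finite K] [Algebra F K]

variable (F) in
theorem units_pow_card_pow_finrank_sub_one_eq_one (x : Kˣ) :
    x ^ (Fintype.card F ^ Module.finrank F K - 1) = 1 := by
  rw [← Nat.card_eq_fintype_card, ← Module.natCard_eq_pow_finrank, ← Nat.card_units]
  exact pow_card_eq_one'

theorem algebraMap_norm_eq_pow_card_pow_finrank (x : K) :
    algebraMap F K (Algebra.norm F x) =
      x ^ ((Fintype.card F ^ Module.finrank F K - 1) / (Fintype.card F - 1)) := by
  rw [FiniteField.algebraMap_norm_eq_pow, Module.natCard_eq_pow_finrank (K := F),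
    Nat.card_eq_fintype_card]

end FiniteField

theorem stmt7_general (F K : Type*) [Field F] [Fintype F] [Field K] [Finite K] [Algebra F K]
    (t n N : ℕ) (hrank : Module.finrank F K = t)
    (g : Kˣ) (hg : ∀ x : Kˣ, x ∈ Subgroup.zpowers g)
    (ω : K) (hω : ω = (g : K) ^ N)
    (hres : Function.Surjective (fun p : Fin (Fintype.card F - 1) × Fin n =>
      ((((Fintype.card F ^ t - 1) / (Fintype.card F - 1)) * (p.1 : ℕ)
          + N * (p.2 : ℕ) : ℕ) : ZMod (Fintype.card F ^ t - 1)))) :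
    (⋃ j ∈ Finset.range n, ω ^ j • Set.range (algebraMap F K)) = Set.univ := by
  subst hrank hω
  refine Set.eq_univ_of_forall fun x ↦ ?_
  simp only [Set.mem_iUnion, Finset.mem_range]
  rcases eq_or_ne x 0 with rfl | hx
  · obtain ⟨⟨-, j⟩, -⟩ := hres 0
    exact ⟨j, j.isLt, 0, ⟨0, map_zero _⟩, smul_zero _⟩
  · obtain ⟨⟨i, j⟩, hij⟩ := exists_pow_eq_of_surjective_natCast hg
      (units_pow_card_pow_finrank_sub_one_eq_one F g) hres (Units.mk0 x hx)
    refine ⟨j, j.isLt, _, ⟨Algebra.norm F ((g : K) ^ (i : ℕ)), rfl⟩, ?_⟩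
    calc ((g : K) ^ N) ^ (j : ℕ) • algebraMap F K (Algebra.norm F ((g : K) ^ (i : ℕ)))
      _ = (g : K) ^ ((Fintype.card F ^ Module.finrank F K - 1) / (Fintype.card F - 1) * (i : ℕ)
            + N * (j : ℕ)) := by
        rw [algebraMap_norm_eq_pow_card_pow_finrank, smul_eq_mul]
        ring
      _ = x := by rw [← Units.val_pow_eq_pow_val, hij, Units.val_mk0]

/-- Let `q` be a prime power and `t, n, N` positive integers with `nN = q^t - 1`.  Let `g`
be a generator of `K^* = 𝔽_{q^t}^*` and `ω = g^N` (so `ω^n = 1`).  If the integers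
`((q^t-1)/(q-1))·i + N·j` for `0 ≤ i ≤ q-2`, `0 ≤ j ≤ n-1` form a complete residue system
modulo `q^t - 1`, then `𝔽_{q^t} = ⋃_{j=0}^{n-1} ω^j · 𝔽_q`. -/
theorem stmt7 (F K : Type*) [Field F] [Fintype F] [Field K] [Fintype K] [Algebra F K]
    (t n N : ℕ) (ht : 0 < t) (hn : 0 < n) (hN : 0 < N)
    (hrank : Module.finrank F K = t)
    (hnN : n * N = Fintype.card F ^ t - 1)
    (g : Kˣ) (hg : ∀ x : Kˣ, x ∈ Subgroup.zpowers g)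
    (ω : K) (hω : ω = (g : K) ^ N)
    (hres : Function.Bijective (fun p : Fin (Fintype.card F - 1) × Fin n =>
      ((((Fintype.card F ^ t - 1) / (Fintype.card F - 1)) * (p.1 : ℕ)
          + N * (p.2 : ℕ) : ℕ) : ZMod (Fintype.card F ^ t - 1)))) :
    (⋃ j ∈ Finset.range n, ω ^ j • Set.range (algebraMap F K)) = Set.univ :=
  stmt7_general F K t n N hrank g hg ω hω hres.surjective
end
end

section
/- Let q be a prime power and n a positive integer with gcd(q, n) = 1. Let m = ord_n(q) be the multiplicative order of q modulo n, and set N = (q^m − 1)/n. If gcd(n, N) = 1, then h_q(n) ≥ m − ord_N(q), where ord_N(q) is the multiplicative order of q modulo N. -/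
noncomputable section

/-!
Write `q = |F|`, let `K = F(ζ)` with `ζ` a primitive `n`-th root of unity, so that `[K : F] = m` and
`|Kˣ| = n * N`, and let `γ ∈ K` be a primitive `N`-th root of unity, so that
`[F(γ) : F] = ord_N(q)`. Under the surjection `F ^ n → K`, `a ↦ ∑ a_i ζ ^ i`, the cyclic shift
becomes multiplication by `ζ`. Since `n` and `N` are coprime, `ζ * γ` generates `Kˣ`, so each
element of `K` is a power of `ζ` times an element of `F(γ)`. Hence the preimage of `F(γ)`, which has
codimension `m - ord_N(q)`, is cyclically covering.
-/

theorem finrank_quotient_comap_of_surjective {R V W : Type*} [Ring R] [AddCommGroup V]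
    [AddCommGroup W] [Module R V] [Module R W] {f : V →ₗ[R] W} (hf : Function.Surjective f)
    (L : Submodule R W) : Module.finrank R (V ⧸ L.comap f) = Module.finrank R (W ⧸ L) := by
  have hker : LinearMap.ker (L.mkQ ∘ₗ f) = L.comap f := by
    rw [LinearMap.ker_comp, Submodule.ker_mkQ]
  rw [← hker]
  exact (LinearMap.quotKerEquivOfSurjective (L.mkQ ∘ₗ f)
    (L.mkQ_surjective.comp hf)).finrank_eq

theorem pow_val_finRotate {M : Type*} [Monoid M] {n : ℕ} {x : M} (hx : x ^ n = 1)
    (i : Fin n) : x ^ (finRotate n i : ℕ) = x * x ^ (i : ℕ) := by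
  cases n with
  | zero => exact i.elim0
  | succ k =>
    rw [coe_finRotate, ← pow_succ']
    split_ifs with h
    · rw [h, Fin.val_last, hx, pow_zero]
    · rfl

section CyclicShift

variable {F : Type*} [Field F] {n : ℕ}

theorem cshift_finRotate (a : Fin n → F) (i : Fin n) : cshift F n a (finRotate n i) = a i :=
  congrArg a ((finRotate n).symm_apply_apply i)

theorem cshift_pow_surjective (i : ℕ) : Function.Surjective (cshift F n ^ i) := by
  rw [Module.End.coe_pow]
  exact (finRotate n).symm.injective.surjective_comp_right.iterate i

theorem finrank_sub_finrank_le_hcc_of_isCyclicallyCovering {U : Submodule F (Fin n → F)}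
    (hU : IsCyclicallyCovering U) : n - Module.finrank F U ≤ hcc F n := by
  refine le_csSup ⟨n, ?_⟩ ⟨U, hU, rfl⟩
  rintro _ ⟨_, _, rfl⟩
  exact Nat.sub_le _ _

end CyclicShift

section EvaluationAtRootOfUnity

variable {F K : Type*} [Field F] [Ring K] [Algebra F K] {n : ℕ} {ζ : K}

variable (F n ζ) in
/-- The evaluation map `F ^ n → K`, `a ↦ ∑ a_i ζ ^ i`, which turns the cyclic shift into
multiplication by `ζ` when `ζ ^ n = 1`. -/
def evalPow : (Fin n → F) →ₗ[F] K :=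
  Fintype.linearCombination F fun i : Fin n => ζ ^ (i : ℕ)

theorem evalPow_cshift (hζ : ζ ^ n = 1) (a : Fin n → F) :
    evalPow F n ζ (cshift F n a) = ζ * evalPow F n ζ a := by
  simp only [evalPow, Fintype.linearCombination_apply, Finset.mul_sum, mul_smul_comm]
  rw [← Equiv.sum_comp (finRotate n)]
  simp only [cshift_finRotate, pow_val_finRotate hζ]

theorem evalPow_cshift_pow (hζ : ζ ^ n = 1) (i : ℕ) (a : Fin n → F) :
    evalPow F n ζ ((cshift F n ^ i) a) = ζ ^ i * evalPow F n ζ a := by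
  induction i with
  | zero => simp
  | succ k ih =>
    rw [pow_succ', Module.End.mul_apply, evalPow_cshift hζ, ih, pow_succ', mul_assoc]

theorem evalPow_surjective (hn : n ≠ 0) (hζ : ζ ^ n = 1) (htop : Algebra.adjoin F {ζ} = ⊤) :
    Function.Surjective (evalPow F n ζ) := by
  rw [← LinearMap.range_eq_top, eq_top_iff, ← Algebra.top_toSubmodule, ← htop,
    Algebra.adjoin_eq_span, evalPow, Fintype.range_linearCombination, Submodule.span_le]
  intro x hx
  obtain ⟨k, rfl⟩ := Submonoid.mem_closure_singleton.1 hx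
  exact Submodule.subset_span
    ⟨⟨k % n, Nat.mod_lt k (Nat.pos_of_ne_zero hn)⟩, (pow_eq_pow_mod k hζ).symm⟩

theorem isCyclicallyCovering_comap_evalPow (hn : n ≠ 0) (hζ : ζ ^ n = 1) {L : Submodule F K}
    (hL : ∀ x : K, ∃ k : ℕ, ∃ y ∈ L, x = ζ ^ k * y) :
    IsCyclicallyCovering (L.comap (evalPow F n ζ)) := by
  rw [IsCyclicallyCovering, Set.eq_univ_iff_forall]
  intro a
  obtain ⟨k, y, hy, hay⟩ := hL (evalPow F n ζ a)
  obtain ⟨b, rfl⟩ := cshift_pow_surjective (k % n) a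
  have hby : evalPow F n ζ b = y := by
    rw [evalPow_cshift_pow hζ, pow_eq_pow_mod k hζ] at hay
    exact ((IsUnit.of_pow_eq_one hζ hn).pow (k % n)).mul_left_cancel hay
  have hb : b ∈ L.comap (evalPow F n ζ) := by rwa [Submodule.mem_comap, hby]
  exact Set.mem_biUnion (Finset.mem_range.2 (Nat.mod_lt k (Nat.pos_of_ne_zero hn))) ⟨b, hb, rfl⟩

theorem finrank_sub_finrank_le_hcc (hn : n ≠ 0) (hζ : ζ ^ n = 1)
    (htop : Algebra.adjoin F {ζ} = ⊤) {L : Submodule F K}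
    (hL : ∀ x : K, ∃ k : ℕ, ∃ y ∈ L, x = ζ ^ k * y) :
    Module.finrank F K - Module.finrank F L ≤ hcc F n := by
  have hsurj := evalPow_surjective hn hζ htop
  have : Module.Finite F K := Module.Finite.of_surjective _ hsurj
  have hU := finrank_sub_finrank_le_hcc_of_isCyclicallyCovering
    (isCyclicallyCovering_comap_evalPow hn hζ hL)
  calc Module.finrank F K - Module.finrank F L
      = Module.finrank F (K ⧸ L) := (Submodule.finrank_quotient L).symm
    _ = Module.finrank F ((Fin n → F) ⧸ L.comap (evalPow F n ζ)) :=
        (finrank_quotient_comap_of_surjective hsurj L).symm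
    _ = n - Module.finrank F (L.comap (evalPow F n ζ)) := by
        rw [Submodule.finrank_quotient, Module.finrank_fin_fun]
    _ ≤ hcc F n := hU

end EvaluationAtRootOfUnity

section RootsOfUnity

open scoped IntermediateField

theorem natCast_ne_zero_of_coprime_card {F : Type*} [Field F] [Fintype F] {n : ℕ}
    (h : (Fintype.card F).Coprime n) : (n : F) ≠ 0 := by
  have hF : IsCoprime ((Fintype.card F : ℕ) : F) (n : F) := h.cast
  rw [FiniteField.cast_card_eq_zero, isCoprime_zero_left] at hF
  exact hF.ne_zero

theorem finrank_adjoin_of_isPrimitiveRoot {F K : Type*} [Field F] [Fintype F] [Field K]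
    [Algebra F K] {n : ℕ} [NeZero n] {ζ : K} (hζ : IsPrimitiveRoot ζ n) :
    Module.finrank F F⟮ζ⟯ = orderOf (Fintype.card F : ZMod n) := by
  obtain ⟨p, _⟩ := CharP.exists F
  obtain ⟨f, hp, hcard⟩ := FiniteField.card F p
  have : Fact p.Prime := ⟨hp⟩
  have : CharP K p := charP_of_injective_algebraMap' F p
  have hpn : p.Coprime n := by
    rw [hp.coprime_iff_not_dvd, ← CharP.cast_eq_zero_iff K p n]
    exact hζ.neZero'.out
  have hint : IsIntegral F ζ := hζ.isIntegral (NeZero.pos n) |>.tower_top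
  have hdvd : minpoly F ζ ∣ Polynomial.cyclotomic n F := by
    refine minpoly.dvd F ζ ?_
    rw [← Polynomial.eval_map_algebraMap, Polynomial.map_cyclotomic]
    exact hζ.isRoot_cyclotomic (NeZero.pos n)
  rw [IntermediateField.adjoin.finrank hint, Polynomial.natDegree_of_dvd_cyclotomic_of_irreducible
    hcard hpn hdvd (minpoly.irreducible hint), ← orderOf_units, ZMod.coe_unitOfCoprime, hcard]

theorem finrank_of_isCyclotomicExtension (n : ℕ) [NeZero n] (F K : Type*) [Field F] [Fintype F]
    [Field K] [Algebra F K] [IsCyclotomicExtension {n} F K] :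
    Module.finrank F K = orderOf (Fintype.card F : ZMod n) := by
  have hζ := IsCyclotomicExtension.zeta_spec n F K
  have htop := IsCyclotomicExtension.adjoin_primitive_root_eq_top (A := F) hζ
  rw [← finrank_adjoin_of_isPrimitiveRoot hζ, IntermediateField.adjoin_eq_top_of_algebra F _ htop,
    IntermediateField.finrank_top']

theorem exists_isPrimitiveRoot_of_dvd_natCard_sub_one {K : Type*} [Field K] [Finite K] {N : ℕ}
    (hN : N ∣ Nat.card K - 1) : ∃ γ : K, IsPrimitiveRoot γ N := by
  obtain ⟨g, hg⟩ := IsCyclic.exists_ofOrder_eq_natCard (α := Kˣ)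
  obtain ⟨c, hc⟩ := hN
  have hg' : orderOf g = c * N := by rw [hg, Nat.card_units, hc, mul_comm]
  have hprim : IsPrimitiveRoot (g ^ c) N := (IsPrimitiveRoot.orderOf g).pow (orderOf_pos g) hg'
  exact ⟨_, IsPrimitiveRoot.coe_units_iff.2 hprim⟩

theorem exists_eq_pow_mul_pow_of_coprime {R : Type*} [CommRing R] [IsDomain R] {n N : ℕ} [NeZero n]
    [NeZero N] (h : n.Coprime N) {ζ γ x : R} (hζ : IsPrimitiveRoot ζ n) (hγ : IsPrimitiveRoot γ N)
    (hx : x ^ (n * N) = 1) : ∃ k : ℕ, x = ζ ^ k * γ ^ k := by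
  have hprim : IsPrimitiveRoot (ζ * γ) (n * N) := by
    rw [hζ.eq_orderOf, hγ.eq_orderOf] at h ⊢
    rw [← (Commute.all ζ γ).orderOf_mul_eq_mul_orderOf_of_coprime h]
    exact IsPrimitiveRoot.orderOf _
  obtain ⟨k, _, rfl⟩ := hprim.eq_pow_of_pow_eq_one hx
  exact ⟨k, mul_pow ζ γ k⟩

theorem finrank_sub_finrank_adjoin_le_hcc {F K : Type*} [Field F] [Field K] [Finite K] [Algebra F K]
    {n N : ℕ} (hgcd : n.Coprime N) (hcard : Nat.card K = n * N + 1) {ζ γ : K}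
    (hζ : IsPrimitiveRoot ζ n) (hγ : IsPrimitiveRoot γ N) (htop : Algebra.adjoin F {ζ} = ⊤) :
    Module.finrank F K - Module.finrank F F⟮γ⟯ ≤ hcc F n := by
  have hnN : n * N ≠ 0 := by
    have := Finite.one_lt_card (α := K)
    omega
  have : NeZero n := ⟨left_ne_zero_of_mul hnN⟩
  have : NeZero N := ⟨right_ne_zero_of_mul hnN⟩
  refine finrank_sub_finrank_le_hcc (NeZero.ne n) hζ.pow_eq_one htop
    (L := Subalgebra.toSubmodule F⟮γ⟯.toSubalgebra) fun x => ?_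
  rcases eq_or_ne x 0 with rfl | hx
  · exact ⟨0, 0, zero_mem _, by simp⟩
  · have hx1 : x ^ (n * N) = 1 := by
      have := Fintype.ofFinite K
      rw [← FiniteField.pow_card_sub_one_eq_one x hx, ← Nat.card_eq_fintype_card, hcard,
        Nat.add_sub_cancel]
    obtain ⟨k, hk⟩ := exists_eq_pow_mul_pow_of_coprime hgcd hζ hγ hx1
    exact ⟨k, γ ^ k, pow_mem (IntermediateField.mem_adjoin_simple_self F γ) k, hk⟩

end RootsOfUnity

/-- Let `q` be a prime power, `n` positive with `gcd(q, n) = 1`, `m = ord_n(q)` and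
`N = (q^m - 1)/n`.  If `gcd(n, N) = 1`, then `h_q(n) ≥ m - ord_N(q)`. -/
theorem stmt8 (F : Type*) [Field F] [Fintype F]
    (n : ℕ) (hn : 0 < n) (hqn : Nat.gcd (Fintype.card F) n = 1)
    (m N : ℕ) (hm : m = orderOf ((Fintype.card F : ℕ) : ZMod n))
    (hN : n * N = Fintype.card F ^ m - 1)
    (hgcd : Nat.gcd n N = 1) :
    m - orderOf ((Fintype.card F : ℕ) : ZMod N) ≤ hcc F n := by
  have : NeZero n := ⟨hn.ne'⟩
  have : NeZero (n : F) := ⟨natCast_ne_zero_of_coprime_card hqn⟩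
  let K := CyclotomicField n F
  have : Module.Finite F K := IsCyclotomicExtension.finite_of_singleton n F K
  have : Finite K := Module.finite_of_finite F
  have hrank : Module.finrank F K = m := (finrank_of_isCyclotomicExtension n F K).trans hm.symm
  have hcard : Nat.card K = n * N + 1 := by
    rw [hN, ← hrank, ← Nat.card_eq_fintype_card, ← Module.natCard_eq_pow_finrank,
      Nat.sub_add_cancel Nat.card_pos]
  have hN0 : N ≠ 0 := by
    rintro rfl
    exact Finite.one_lt_card.ne' hcard
  have : NeZero N := ⟨hN0⟩
  obtain ⟨γ, hγ⟩ : ∃ γ : K, IsPrimitiveRoot γ N :=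
    exists_isPrimitiveRoot_of_dvd_natCard_sub_one (by simp [hcard])
  rw [← hrank, ← finrank_adjoin_of_isPrimitiveRoot hγ]
  have hζ : IsPrimitiveRoot (IsCyclotomicExtension.zeta n F K) n :=
    IsCyclotomicExtension.zeta_spec n F K
  exact finrank_sub_finrank_adjoin_le_hcc hgcd hcard hζ hγ
    (IsCyclotomicExtension.adjoin_primitive_root_eq_top hζ)
end
end

section
/- h_3(11) = 1; that is, the largest possible codimension of a cyclically covering subspace of 𝔽_3^{11} equals 1: there exists a cyclically covering subspace of 𝔽_3^{11} of codimension 1, but none of codimension 2. -/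
noncomputable section

/-!
Let `K` be the field with `3 ^ 5` elements, `Tr` its trace to `𝔽₃`, and `ζ ∈ K` a primitive
eleventh root of unity. The words `T_ζ(y) = (Tr (y ζ ^ j))_j`, the words `T_{ζ⁻¹}(y)` and the
constant words together span `𝔽₃ ^ 11`, and shifting `T_ζ(y)` replaces `y` by some `y ζ ^ k`.

Let `U` be cyclically covering; it contains the constants. Suppose a functional `f` vanishes on `U`
but on neither family of trace words. Scaling `y` and `z` so that `f (T_ζ(y w)) = Tr w` and
`f (T_{ζ⁻¹}(z w)) = Tr w` for all `w`, the functional `f` takes the values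
`Tr (ζ ^ k) + Tr (ζ ^ (-k))`, which are `± 1`, on the shifts of `T_ζ(y) + T_{ζ⁻¹}(z)`, none of
which is then in `U`. Hence the annihilator of `U` is the union of two subspaces, so is one of them,
and `U` contains one of the two families, say all `T_{ζ⁻¹}(y)`. The codimension of `U` is then that
of `W = T_ζ⁻¹(U)` in `K`.

Every `y ∈ K` has some `y ζ ^ k` in `W`. Since `-1` is not a square in `K`, it follows that
`w ↦ w ^ 22` maps the nonzero squares in `W` onto the eleventh roots of unity. If `dim W ≤ 3`,
counting forces `dim W = 3`, with `13` nonzero squares. As `22 = 1 + 3 + 9 + 9` has ternary digit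
sum `4 < 2 * 3`, the sum of `w ^ 22` over `W` vanishes as in the Chevalley–Warning theorem. But it
is twice `∑ ζ ^ i + a ^ 22 + b ^ 22 = a ^ 22 + b ^ 22` for some nonzero `a` and `b`, so that `-1`
would be a square. So `dim W ≥ 4` and `U` has codimension at most 1.

Conversely the kernel of `x ↦ Tr (c ∑ x_j ζ ^ j)` with `Tr c ≠ 0` is cyclically covering: otherwise
`Tr (y ζ ^ k) ≠ 0` for some `y` and all `k`, and `∑ Tr (y ζ ^ k) ^ 2 = 11 ≠ 0`, whereas expanding
the traces gives `0` because `11` divides no `3 ^ a + 3 ^ b`.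
-/

open Module

section Covering

variable {F : Type*} [Field F] {n : ℕ} [NeZero n]

theorem cshift_pow_apply_s13 (i : ℕ) (x : Fin n → F) (j : Fin n) :
    (cshift F n ^ i) x j = x (j - Fin.ofNat n i) := by
  induction i generalizing j with
  | zero => simp
  | succ i ih =>
    have hsucc : Fin.ofNat n (i + 1) = 1 + Fin.ofNat n i := by
      ext
      simp [Fin.val_add, add_comm]
    rw [pow_succ', Module.End.mul_apply, hsucc, ← sub_sub, ← ih, ← finRotate_symm_apply]
    rfl

theorem isCyclicallyCovering_iff {U : Submodule F (Fin n → F)} :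
    IsCyclicallyCovering U ↔ ∀ x : Fin n → F, ∃ k : Fin n, (fun j ↦ x (j + k)) ∈ U := by
  rw [IsCyclicallyCovering, Set.eq_univ_iff_forall]
  refine forall_congr' fun x ↦ ?_
  simp only [Set.mem_iUnion, Set.mem_image, SetLike.mem_coe, Finset.mem_range, exists_prop]
  constructor
  · rintro ⟨i, -, u, hu, rfl⟩
    exact ⟨Fin.ofNat n i, by simpa only [cshift_pow_apply_s13, add_sub_cancel_right] using hu⟩
  · rintro ⟨k, hk⟩
    refine ⟨k, k.isLt, _, hk, ?_⟩
    ext j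
    simp [cshift_pow_apply_s13]

theorem IsCyclicallyCovering.const_mem {U : Submodule F (Fin n → F)}
    (hU : IsCyclicallyCovering U) (a : F) : Function.const (Fin n) a ∈ U := by
  obtain ⟨_, h⟩ := isCyclicallyCovering_iff.1 hU (Function.const (Fin n) a)
  exact h

end Covering

section LinearAlgebra

variable {F V V' : Type*} [Field F] [AddCommGroup V] [Module F V] [AddCommGroup V'] [Module F V']
  [FiniteDimensional F V] [FiniteDimensional F V']

theorem finrank_add_finrank_comap {f : V →ₗ[F] V'} {U : Submodule F V'}
    (h : LinearMap.range f ⊔ U = ⊤) :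
    finrank F V' + finrank F (U.comap f) = finrank F V + finrank F U := by
  have hsurj : LinearMap.range (U.mkQ ∘ₗ f) = ⊤ := by
    rw [LinearMap.range_comp, Submodule.map_mkQ_eq_top, sup_comm, h]
  have hker : LinearMap.ker (U.mkQ ∘ₗ f) = U.comap f := by
    rw [LinearMap.ker_comp, Submodule.ker_mkQ]
  have hrank := (U.mkQ ∘ₗ f).finrank_range_add_finrank_ker
  rw [hsurj, hker, finrank_top] at hrank
  have hquot := U.finrank_quotient_add_finrank
  omega

end LinearAlgebra

section PowerSums

/-- As in the proof of the Chevalley–Warning theorem: after expansion in coordinates over `F`, each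
monomial has degree less than `Fintype.card F - 1` in some coordinate. -/
theorem sum_prod_linearMap_eq_zero {F W L ι : Type*} [Field F] [Fintype F] [AddCommGroup W]
    [Module F W] [Fintype W] [CommRing L] [Algebra F L] [Fintype ι] (ℓ : ι → W →ₗ[F] L)
    (h : Fintype.card ι < (Fintype.card F - 1) * finrank F W) :
    ∑ w, ∏ i, ℓ i w = 0 := by
  classical
  let b := finBasis F W
  have hmonomial (e : ι → Fin (finrank F W)) :
      ∑ x : Fin (finrank F W) → F, ∏ i, x (e i) = 0 := by
    obtain ⟨t, ht⟩ : ∃ t, Fintype.card {i // e i = t} < Fintype.card F - 1 := by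
      by_contra! hcon
      have hfib := Fintype.card_congr (Equiv.sigmaFiberEquiv e)
      rw [Fintype.card_sigma] at hfib
      have hle := Finset.card_nsmul_le_sum Finset.univ _ _ fun t _ ↦ hcon t
      simp only [Finset.card_univ, Fintype.card_fin, smul_eq_mul] at hle
      rw [mul_comm] at h
      omega
    calc ∑ x : Fin (finrank F W) → F, ∏ i, x (e i)
        = ∑ x : Fin (finrank F W) → F, ∏ s, x s ^ Fintype.card {i // e i = s} := by
          refine Finset.sum_congr rfl fun x _ ↦ ?_
          rw [← Fintype.prod_fiberwise e]
          refine Finset.prod_congr rfl fun s _ ↦ ?_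
          rw [Finset.prod_congr rfl fun i _ ↦ congrArg x i.2, Finset.prod_const, Finset.card_univ]
      _ = ∏ s, ∑ a : F, a ^ Fintype.card {i // e i = s} := (Fintype.prod_sum _).symm
      _ = 0 := Finset.prod_eq_zero (Finset.mem_univ t) (FiniteField.sum_pow_lt_card_sub_one F _ ht)
  calc ∑ w, ∏ i, ℓ i w
      = ∑ x : Fin (finrank F W) → F, ∏ i, ∑ t, x t • ℓ i (b t) := by
        rw [← b.equivFun.symm.toEquiv.sum_comp]
        exact Finset.sum_congr rfl fun x _ ↦ by
          simp [Basis.equivFun_symm_apply]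
    _ = ∑ e : ι → Fin (finrank F W),
          (∑ x : Fin (finrank F W) → F, ∏ i, x (e i)) • ∏ i, ℓ i (b (e i)) := by
        simp only [Fintype.prod_sum, Finset.sum_smul, Finset.prod_smul]
        exact Finset.sum_comm
    _ = 0 := by simp only [hmonomial, zero_smul, Finset.sum_const_zero]

theorem sum_pow_sum_card_pow_eq_zero {F K ι : Type*} [Field F] [Fintype F] [CommRing K]
    [Algebra F K] [Fintype ι] (W : Submodule F K) [Fintype W] (e : ι → ℕ)
    (h : Fintype.card ι < (Fintype.card F - 1) * finrank F W) :
    ∑ w : W, (w : K) ^ ∑ i, Fintype.card F ^ e i = 0 := by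
  rw [← sum_prod_linearMap_eq_zero
    (fun i ↦ ((FiniteField.frobeniusAlgHom F K ^ e i).toLinearMap) ∘ₗ W.subtype) h]
  refine Finset.sum_congr rfl fun w _ ↦ ?_
  rw [← Finset.prod_pow_eq_pow_sum]
  simp [AlgHom.coe_pow, FiniteField.coe_frobeniusAlgHom, pow_iterate]

end PowerSums

section Counting

theorem sum_eq_two_nsmul_sum_filter {G M : Type*} [AddGroup G] [Fintype G] [AddCommMonoid M]
    {p : G → Prop} [DecidablePred p] (hp : ∀ x ≠ 0, p (-x) ↔ ¬ p x)
    {f : G → M} (hf : ∀ x, f (-x) = f x) (hf₀ : f 0 = 0) :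
    ∑ x, f x = 2 • ∑ x with p x, f x := by
  have hneg : ∑ x with ¬ p x, f x = ∑ x with p x, f x := by
    simp only [Finset.sum_filter]
    rw [← Equiv.sum_comp (Equiv.neg G) fun x ↦ if ¬ p x then f x else 0]
    refine Finset.sum_congr rfl fun x _ ↦ ?_
    by_cases hx : x = 0
    · simp [hx, hf₀]
    · simp [hp x hx, hf]
  rw [← Finset.sum_filter_add_sum_filter_not Finset.univ p, hneg, two_nsmul]

theorem card_le_card_of_forall_exists_apply_eq {α ι β : Type*} [Fintype ι] {s : Finset α}
    {f : α → β} {g : ι → β} (hg : Function.Injective g) (hfg : ∀ i, ∃ x ∈ s, f x = g i) :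
    Fintype.card ι ≤ s.card := by
  choose x hxs hfx using hfg
  exact Finset.card_le_card_of_injOn x (fun i _ ↦ hxs i)
    fun i _ j _ hij ↦ hg (by rw [← hfx, ← hfx, hij])

theorem exists_sum_eq_sum_add_of_card_eq_add_two {α ι M : Type*} [AddCommMonoid M] [Fintype ι]
    {s : Finset α} {f : α → M} {g : ι → M} (hg : Function.Injective g)
    (hfg : ∀ i, ∃ x ∈ s, f x = g i) (hs : s.card = Fintype.card ι + 2) :
    ∃ a ∈ s, ∃ b ∈ s, ∑ x ∈ s, f x = ∑ i, g i + (f a + f b) := by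
  classical
  choose x hxs hfx using hfg
  have hx : Function.Injective x := fun i j hij ↦ hg (by rw [← hfx, ← hfx, hij])
  have himage : Finset.univ.image x ⊆ s := Finset.image_subset_iff.2 fun i _ ↦ hxs i
  obtain ⟨a, b, hab, hrest⟩ : ∃ a b, a ≠ b ∧ s \ Finset.univ.image x = {a, b} := by
    rw [← Finset.card_eq_two, Finset.card_sdiff_of_subset himage,
      Finset.card_image_of_injective _ hx, Finset.card_univ, hs, Nat.add_sub_cancel_left]
  have hmem {c} (hc : c ∈ ({a, b} : Finset α)) : c ∈ s := (Finset.mem_sdiff.1 (hrest ▸ hc)).1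
  refine ⟨a, hmem (by simp), b, hmem (by simp), ?_⟩
  rw [← Finset.sum_sdiff himage, hrest, Finset.sum_pair hab,
    Finset.sum_image fun i _ j _ h ↦ hx h, add_comm]
  simp only [hfx]

end Counting

section Trace

theorem exists_isPrimitiveRoot_of_dvd_card_sub_one (K : Type*) [Field K] [Finite K] {n : ℕ}
    (h : n ∣ Nat.card K - 1) : ∃ ζ : K, IsPrimitiveRoot ζ n := by
  obtain ⟨g, hg⟩ := IsCyclic.exists_generator (α := Kˣ)
  have hprim : IsPrimitiveRoot (g : K) (Nat.card K - 1) := by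
    rw [← Nat.card_units, ← orderOf_eq_card_of_forall_mem_zpowers hg, ← orderOf_units]
    exact IsPrimitiveRoot.orderOf _
  obtain ⟨m, hm⟩ := h
  exact ⟨_, hprim.pow (Nat.sub_pos_of_lt Finite.one_lt_card) (hm.trans (mul_comm n m))⟩

variable {F K : Type*} [Field F] [Finite F] [Field K] [Finite K] [Algebra F K]

theorem exists_apply_mul_eq_trace {φ : Dual F K} (hφ : φ ≠ 0) :
    ∃ y, ∀ z, φ (y * z) = Algebra.trace F K z := by
  obtain ⟨a, rfl⟩ :=
    ((Algebra.traceForm F K).toDual (traceForm_nondegenerate F K)).surjective φ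
  have ha : a ≠ 0 := by
    rintro rfl
    exact hφ (map_zero _)
  exact ⟨a⁻¹, fun z ↦ by
    rw [LinearMap.BilinForm.toDual_def, Algebra.traceForm_apply, mul_inv_cancel_left₀ ha]⟩

theorem exists_trace_mul_pow_eq_zero {ζ : K} {n : ℕ} [NeZero n] (hζ : IsPrimitiveRoot ζ n)
    (h : ∀ e : Fin (Nat.card F - 1) → ℕ, (∀ i, e i < finrank F K) →
      ¬ n ∣ ∑ i, Nat.card F ^ e i) (y : K) :
    ∃ k < n, Algebra.trace F K (y * ζ ^ k) = 0 := by
  classical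
  have := Fintype.ofFinite F
  have := hζ.neZero'
  by_contra! hne
  have hsum : ∑ k ∈ Finset.range n,
      algebraMap F K (Algebra.trace F K (y * ζ ^ k)) ^ (Nat.card F - 1) = n := by
    rw [Finset.sum_congr rfl fun k hk ↦ ?_, Finset.sum_const, Finset.card_range, nsmul_one]
    rw [← map_pow, Nat.card_eq_fintype_card,
      FiniteField.pow_card_sub_one_eq_one _ (hne k (Finset.mem_range.1 hk)), map_one]
  refine NeZero.ne (n : K) (hsum.symm.trans ?_)
  simp only [FiniteField.algebraMap_trace_eq_sum_pow, Finset.sum_pow', Finset.prod_pow_eq_pow_sum]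
  rw [Finset.sum_comm]
  refine Finset.sum_eq_zero fun e he ↦ ?_
  set d := ∑ i, Nat.card F ^ e i
  have hd : ζ ^ d ≠ 1 := fun hone ↦ h e
    (fun i ↦ Finset.mem_range.1 (Fintype.mem_piFinset.1 he i)) ((hζ.pow_eq_one_iff_dvd d).1 hone)
  have hgeom : ∑ k ∈ Finset.range n, (ζ ^ d) ^ k = 0 := by
    rw [geom_sum_eq hd, ← pow_mul, mul_comm, pow_mul, hζ.pow_eq_one, one_pow, sub_self, zero_div]
  simp only [mul_pow, ← Finset.mul_sum, ← pow_mul, mul_comm _ d] at hgeom ⊢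
  rw [hgeom, mul_zero]

end Trace

section TraceWord

variable {F K : Type*} [Field F] [Field K] [Algebra F K] {n : ℕ}

/-- The trace word `(Tr (y ζ ^ j))_j` attached to `y`, where `Tr` is the trace of `K` over `F`. If
`ζ ^ n = 1`, the words of all `y` form a cyclic code, that is, a subspace invariant under shifts. -/
def traceWord (F : Type*) {K : Type*} [Field F] [Field K] [Algebra F K] (n : ℕ) (ζ : K) :
    K →ₗ[F] (Fin n → F) :=
  LinearMap.pi fun j ↦ Algebra.trace F K ∘ₗ LinearMap.mulRight F (ζ ^ (j : ℕ))

theorem traceWord_apply (ζ y : K) (j : Fin n) :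
    traceWord F n ζ y j = Algebra.trace F K (y * ζ ^ (j : ℕ)) :=
  rfl

theorem traceWord_add {ζ : K} (hζ : ζ ^ n = 1) (y : K) (j k : Fin n) :
    traceWord F n ζ y (j + k) = traceWord F n ζ (y * ζ ^ (k : ℕ)) j := by
  rw [traceWord_apply, traceWord_apply, Fin.val_add, ← pow_eq_pow_mod _ hζ, pow_add,
    mul_comm (ζ ^ (j : ℕ)), mul_assoc]

end TraceWord

section HyperplaneCovering

variable {F K : Type*} [Field F] [Field K] [Algebra F K] {n : ℕ} [NeZero n]

theorem sum_smul_pow_add {ζ : K} (hζ : ζ ^ n = 1) (x : Fin n → F) (k : Fin n) :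
    ∑ j, x (j + k) • ζ ^ (j : ℕ) = (∑ j, x j • ζ ^ (j : ℕ)) * ζ⁻¹ ^ (k : ℕ) := by
  have hζ₀ : ζ ^ (k : ℕ) ≠ 0 :=
    pow_ne_zero _ (IsUnit.of_pow_eq_one hζ (NeZero.ne n)).ne_zero
  rw [inv_pow, eq_mul_inv_iff_mul_eq₀ hζ₀, Finset.sum_mul,
    ← Equiv.sum_comp (Equiv.addRight k) fun j ↦ x j • ζ ^ (j : ℕ)]
  refine Finset.sum_congr rfl fun j _ ↦ ?_
  rw [Equiv.coe_addRight, Fin.val_add, ← pow_eq_pow_mod _ hζ, smul_mul_assoc, pow_add]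

theorem exists_isCyclicallyCovering_finrank_add_one_eq [Finite F] [Finite K] {ζ : K}
    (hζ : IsPrimitiveRoot ζ n)
    (h : ∀ e : Fin (Nat.card F - 1) → ℕ, (∀ i, e i < finrank F K) →
      ¬ n ∣ ∑ i, Nat.card F ^ e i) :
    ∃ U : Submodule F (Fin n → F), IsCyclicallyCovering U ∧ finrank F U + 1 = n := by
  obtain ⟨c, hc⟩ := Algebra.trace_surjective F K 1
  let f : Dual F (Fin n → F) := Algebra.trace F K ∘ₗ LinearMap.mulLeft F c ∘ₗ
    Fintype.linearCombination F fun j : Fin n ↦ ζ ^ (j : ℕ)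
  have hf (x : Fin n → F) : f x = Algebra.trace F K (c * ∑ j, x j • ζ ^ (j : ℕ)) := rfl
  have hf₀ : f ≠ 0 := fun h₀ ↦ by
    have hsingle : f (Pi.single 0 1) = 1 := by
      simp [f, Fintype.linearCombination_apply_single, hc]
    rw [h₀] at hsingle
    exact zero_ne_one hsingle
  refine ⟨LinearMap.ker f, isCyclicallyCovering_iff.2 fun x ↦ ?_, ?_⟩
  · obtain ⟨k, hk, hzero⟩ :=
      exists_trace_mul_pow_eq_zero hζ.inv h (c * ∑ j, x j • ζ ^ (j : ℕ))
    refine ⟨⟨k, hk⟩, ?_⟩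
    rw [LinearMap.mem_ker, hf, sum_smul_pow_add hζ.pow_eq_one, ← mul_assoc, hzero]
  · rw [Module.Dual.finrank_ker_add_one_of_ne_zero hf₀, finrank_fin_fun]

end HyperplaneCovering

section Squares

theorem isSquare_neg_iff_not_isSquare {K : Type*} [Field K] [Finite K]
    (hK : Nat.card K % 4 = 3) {x : K} (hx : x ≠ 0) : IsSquare (-x) ↔ ¬ IsSquare x := by
  classical
  have := Fintype.ofFinite K
  rw [Nat.card_eq_fintype_card] at hK
  have hneg : quadraticChar K (-1) = -1 := by
    rw [quadraticChar_neg_one_iff_not_isSquare, FiniteField.isSquare_neg_one_iff]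
    exact fun h ↦ h hK
  rw [← quadraticChar_neg_one_iff_not_isSquare, ← quadraticChar_one_iff_isSquare (neg_ne_zero.2 hx),
    neg_eq_neg_one_mul, map_mul, hneg, neg_one_mul, neg_eq_iff_eq_neg]

variable {F K : Type*} [Field F] [Field K] [Algebra F K]

open Classical in
/-- The squares of the field `K` that are nonzero elements of `W`. When `-1` is not a square, they
form a half-system: exactly one of `w` and `-w` is among them, for each nonzero `w` in `W`. -/
def nonzeroSquares (W : Submodule F K) [Fintype W] : Finset W :=
  {w | w ≠ 0 ∧ IsSquare (w : K)}

theorem mem_nonzeroSquares {W : Submodule F K} [Fintype W] {w : W} :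
    w ∈ nonzeroSquares W ↔ w ≠ 0 ∧ IsSquare (w : K) := by
  simp [nonzeroSquares]

variable [Finite K] {W : Submodule F K} [Fintype W]

theorem sum_eq_two_nsmul_sum_nonzeroSquares {M : Type*} [AddCommMonoid M]
    (hK : Nat.card K % 4 = 3) {f : W → M} (hf : ∀ w, f (-w) = f w) (hf₀ : f 0 = 0) :
    ∑ w, f w = 2 • ∑ w ∈ nonzeroSquares W, f w := by
  classical
  rw [nonzeroSquares]
  refine sum_eq_two_nsmul_sum_filter (fun w hw ↦ ?_) hf hf₀
  have hsq := isSquare_neg_iff_not_isSquare hK (Subtype.coe_ne_coe.2 hw)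
  simpa [hw] using hsq

theorem card_eq_two_mul_card_nonzeroSquares_add_one (hK : Nat.card K % 4 = 3) :
    Fintype.card W = 2 * (nonzeroSquares W).card + 1 := by
  classical
  have hsum := sum_eq_two_nsmul_sum_nonzeroSquares (W := W) hK
    (f := fun w ↦ if w ≠ 0 then 1 else 0) (by simp) (by simp)
  have hsquares : ∑ w ∈ nonzeroSquares W, (if w ≠ 0 then 1 else 0) = (nonzeroSquares W).card := by
    rw [Finset.card_eq_sum_ones]
    exact Finset.sum_congr rfl fun w hw ↦ if_pos (mem_nonzeroSquares.1 hw).1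
  have hne : (∑ w : W, if w ≠ 0 then 1 else 0) = Fintype.card W - 1 := by
    rw [Finset.sum_boole, Finset.filter_ne', Finset.card_erase_of_mem (Finset.mem_univ _),
      Finset.card_univ, Nat.cast_id]
  have hpos := Fintype.card_pos (α := W)
  rw [hsquares, hne, smul_eq_mul] at hsum
  omega

end Squares

section Eleven

variable {K : Type*} [Field K] [Finite K] [Algebra (ZMod 3) K]

theorem natCard_eq_of_finrank_eq_five (hK : finrank (ZMod 3) K = 5) : Nat.card K = 243 := by
  rw [Module.natCard_eq_pow_finrank (K := ZMod 3), hK, Nat.card_zmod]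
  norm_num

theorem exists_isPrimitiveRoot_eleven (hK : finrank (ZMod 3) K = 5) :
    ∃ ζ : K, IsPrimitiveRoot ζ 11 :=
  exists_isPrimitiveRoot_of_dvd_card_sub_one K
    (by rw [natCard_eq_of_finrank_eq_five hK]; norm_num)

theorem exists_isPrimitiveRoot_forall_exists_nonzeroSquares_pow_eq
    (hK : finrank (ZMod 3) K = 5) {W : Submodule (ZMod 3) K} [Fintype W]
    (hW : ∀ y : K, ∃ z, z ^ 11 = 1 ∧ y * z ∈ W) :
    ∃ ξ : K, IsPrimitiveRoot ξ 11 ∧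
      ∀ i : Fin 11, ∃ w ∈ nonzeroSquares W, (w : K) ^ 22 = ξ ^ (i : ℕ) := by
  have hcard := natCard_eq_of_finrank_eq_five hK
  obtain ⟨g, hg⟩ := exists_isPrimitiveRoot_of_dvd_card_sub_one K (n := 242) (by rw [hcard])
  refine ⟨g ^ 22, hg.pow (by norm_num) rfl, fun i ↦ ?_⟩
  obtain ⟨z, hz, hzW⟩ := hW (g ^ (i : ℕ))
  set w := g ^ (i : ℕ) * z
  have hw : w ^ 22 = (g ^ 22) ^ (i : ℕ) := by
    rw [mul_pow, pow_mul z 11 2, hz, one_pow, mul_one, pow_right_comm]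
  have hw₀ : w ≠ 0 := fun h ↦ by
    rw [h, ← pow_mul, zero_pow (by norm_num)] at hw
    exact pow_ne_zero _ (hg.ne_zero (by norm_num)) hw.symm
  by_cases hsq : IsSquare w
  · exact ⟨⟨w, hzW⟩, mem_nonzeroSquares.2 ⟨by simpa using hw₀, hsq⟩, hw⟩
  · refine ⟨⟨-w, W.neg_mem hzW⟩, mem_nonzeroSquares.2 ⟨by simpa using hw₀, ?_⟩, ?_⟩
    · exact (isSquare_neg_iff_not_isSquare (by rw [hcard]) hw₀).2 hsq
    · rw [← hw]
      exact Even.neg_pow (by decide) w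

theorem sum_nonzeroSquares_pow_eq_zero (hK : finrank (ZMod 3) K = 5)
    {W : Submodule (ZMod 3) K} [Fintype W] (hW : finrank (ZMod 3) W = 3) :
    ∑ w ∈ nonzeroSquares W, (w : K) ^ 22 = 0 := by
  -- `22 = 3 ^ 0 + 3 ^ 1 + 3 ^ 2 + 3 ^ 2`
  have hsum : ∑ w : W, (w : K) ^ 22 = 0 :=
    sum_pow_sum_card_pow_eq_zero W ![0, 1, 2, 2] (by simp [hW])
  rw [sum_eq_two_nsmul_sum_nonzeroSquares (by rw [natCard_eq_of_finrank_eq_five hK])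
    (fun w ↦ by simp [Even.neg_pow (by decide : Even 22)]) (by simp), two_nsmul,
    ← two_smul (ZMod 3)] at hsum
  exact (smul_eq_zero.1 hsum).resolve_left (by decide)

theorem four_le_finrank_of_forall_exists_mul_mem (hK : finrank (ZMod 3) K = 5)
    {W : Submodule (ZMod 3) K} (hW : ∀ y : K, ∃ z, z ^ 11 = 1 ∧ y * z ∈ W) :
    4 ≤ finrank (ZMod 3) W := by
  have := Fintype.ofFinite W
  have hmod : Nat.card K % 4 = 3 := by rw [natCard_eq_of_finrank_eq_five hK]
  obtain ⟨ξ, hξ, hrep⟩ := exists_isPrimitiveRoot_forall_exists_nonzeroSquares_pow_eq hK hW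
  have hinj : Function.Injective fun i : Fin 11 ↦ ξ ^ (i : ℕ) := fun i j h ↦
    Fin.ext (hξ.pow_inj i.isLt j.isLt h)
  have hcard : 3 ^ finrank (ZMod 3) W = 2 * (nonzeroSquares W).card + 1 := by
    rw [← card_eq_two_mul_card_nonzeroSquares_add_one hmod,
      Module.card_eq_pow_finrank (K := ZMod 3), ZMod.card]
  have hge := card_le_card_of_forall_exists_apply_eq hinj hrep
  rw [Fintype.card_fin] at hge
  by_contra! hlt
  have hrank : finrank (ZMod 3) W = 3 := by
    interval_cases finrank (ZMod 3) W <;> omega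
  rw [hrank] at hcard
  obtain ⟨a, -, b, hb, hsum⟩ := exists_sum_eq_sum_add_of_card_eq_add_two
    (f := fun w : W ↦ (w : K) ^ 22) hinj hrep (by rw [Fintype.card_fin]; omega)
  rw [sum_nonzeroSquares_pow_eq_zero hK hrank, Fin.sum_univ_eq_sum_range (ξ ^ ·),
    hξ.geom_sum_eq_zero (by norm_num), zero_add] at hsum
  have hb₀ : (b : K) ^ 22 ≠ 0 := pow_ne_zero _ (by simpa using (mem_nonzeroSquares.1 hb).1)
  have hsq (x : K) : IsSquare (x ^ 22) := Even.isSquare_pow (by decide) x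
  have hneg : -(b : K) ^ 22 = (a : K) ^ 22 := neg_eq_of_add_eq_zero_left hsum.symm
  exact (isSquare_neg_iff_not_isSquare hmod hb₀).1 (hneg ▸ hsq a) (hsq b)

theorem trace_add_trace_inv_of_ne_one (hK : finrank (ZMod 3) K = 5) {z : K} (hz : z ^ 11 = 1)
    (hz₁ : z ≠ 1) : Algebra.trace (ZMod 3) K z + Algebra.trace (ZMod 3) K z⁻¹ = -1 := by
  have hinv : z⁻¹ = z ^ 10 := inv_eq_of_mul_eq_one_right (by rw [← pow_succ', hz])
  have hgeom : ∑ i ∈ Finset.range 11, z ^ i = 0 := by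
    rw [geom_sum_eq hz₁, hz, sub_self, zero_div]
  have hred (m : ℕ) : z ^ m = z ^ (m % 11) := pow_eq_pow_mod m hz
  apply (algebraMap (ZMod 3) K).injective
  rw [map_add, FiniteField.algebraMap_trace_eq_sum_pow, FiniteField.algebraMap_trace_eq_sum_pow,
    hK, hinv, map_neg, map_one, ← sub_eq_zero, sub_neg_eq_add, ← hgeom]
  -- Modulo `11`, the exponents `3 ^ i` and `10 * 3 ^ i` with `i < 5` run through `1, …, 10`.
  simp only [Finset.sum_range_succ, Finset.sum_range_zero, Nat.card_zmod, ← pow_mul]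
  rw [hred (3 ^ 3), hred (3 ^ 4), hred (10 * 3 ^ 1), hred (10 * 3 ^ 2), hred (10 * 3 ^ 3),
    hred (10 * 3 ^ 4)]
  simp only [Nat.reducePow, Nat.reduceMul, Nat.reduceMod]
  ring

theorem trace_one_of_finrank_eq_five (hK : finrank (ZMod 3) K = 5) :
    Algebra.trace (ZMod 3) K 1 = -1 := by
  rw [← map_one (algebraMap (ZMod 3) K), Algebra.trace_algebraMap, hK]
  decide

theorem trace_add_trace_inv_ne_zero (hK : finrank (ZMod 3) K = 5) {z : K} (hz : z ^ 11 = 1) :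
    Algebra.trace (ZMod 3) K z + Algebra.trace (ZMod 3) K z⁻¹ ≠ 0 := by
  by_cases hz₁ : z = 1
  · rw [hz₁, inv_one, trace_one_of_finrank_eq_five hK]
    decide
  · rw [trace_add_trace_inv_of_ne_one hK hz hz₁]
    decide

variable {ζ : K} {U : Submodule (ZMod 3) (Fin 11 → ZMod 3)}

theorem single_eq_neg_one_add_traceWord_add_traceWord_inv (hK : finrank (ZMod 3) K = 5)
    (hζ : IsPrimitiveRoot ζ 11) (k : Fin 11) :
    Pi.single k 1 = -(1 + traceWord (ZMod 3) 11 ζ (ζ ^ (k : ℕ))⁻¹ +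
      traceWord (ZMod 3) 11 ζ⁻¹ (ζ ^ (k : ℕ))) := by
  ext j
  set z := (ζ ^ (k : ℕ))⁻¹ * ζ ^ (j : ℕ) with hzdef
  have hz : z ^ 11 = 1 := by
    have hpow (m : ℕ) : (ζ ^ m) ^ 11 = 1 := by rw [pow_right_comm, hζ.pow_eq_one, one_pow]
    rw [mul_pow, inv_pow, hpow, hpow, inv_one, one_mul]
  have hentry : (traceWord (ZMod 3) 11 ζ⁻¹ (ζ ^ (k : ℕ))) j = Algebra.trace (ZMod 3) K z⁻¹ := by
    rw [traceWord_apply, hzdef, mul_inv, inv_inv, inv_pow]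
  rw [Pi.neg_apply, Pi.add_apply, Pi.add_apply, Pi.one_apply, hentry, traceWord_apply, ← hzdef,
    add_assoc]
  by_cases hjk : j = k
  · have hz₁ : z = 1 := by
      rw [hzdef, hjk, inv_mul_cancel₀ (pow_ne_zero _ (hζ.ne_zero (by norm_num)))]
    rw [hjk, Pi.single_eq_same, hz₁, inv_one, trace_one_of_finrank_eq_five hK]
    decide
  · have hz₁ : z ≠ 1 := fun h ↦ hjk <| Fin.ext <| hζ.pow_inj j.isLt k.isLt
      (eq_of_inv_mul_eq_one h).symm
    rw [Pi.single_eq_of_ne hjk, trace_add_trace_inv_of_ne_one hK hz hz₁, add_neg_cancel, neg_zero]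

theorem range_traceWord_sup_eq_top (hK : finrank (ZMod 3) K = 5) (hζ : IsPrimitiveRoot ζ 11)
    (hone : 1 ∈ U) (hU : LinearMap.range (traceWord (ZMod 3) 11 ζ⁻¹) ≤ U) :
    LinearMap.range (traceWord (ZMod 3) 11 ζ) ⊔ U = ⊤ := by
  rw [eq_top_iff, ← (Pi.basisFun (ZMod 3) (Fin 11)).span_eq, Submodule.span_le]
  rintro _ ⟨k, rfl⟩
  rw [SetLike.mem_coe, Pi.basisFun_apply,
    single_eq_neg_one_add_traceWord_add_traceWord_inv hK hζ k]
  exact neg_mem (add_mem (add_mem (Submodule.mem_sup_right hone)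
    (Submodule.mem_sup_left (LinearMap.mem_range_self _ _)))
    (Submodule.mem_sup_right (hU (LinearMap.mem_range_self _ _))))

theorem IsCyclicallyCovering.comp_traceWord_eq_zero_or_comp_traceWord_inv_eq_zero
    (hU : IsCyclicallyCovering U) (hK : finrank (ZMod 3) K = 5) (hζ : ζ ^ 11 = 1)
    {f : Dual (ZMod 3) (Fin 11 → ZMod 3)} (hf : f ∈ U.dualAnnihilator) :
    f ∘ₗ traceWord (ZMod 3) 11 ζ = 0 ∨ f ∘ₗ traceWord (ZMod 3) 11 ζ⁻¹ = 0 := by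
  by_contra! hne
  obtain ⟨y, hy⟩ := exists_apply_mul_eq_trace hne.1
  obtain ⟨y', hy'⟩ := exists_apply_mul_eq_trace hne.2
  obtain ⟨k, hk⟩ := isCyclicallyCovering_iff.1 hU
    (traceWord (ZMod 3) 11 ζ y + traceWord (ZMod 3) 11 ζ⁻¹ y')
  have hζinv : ζ⁻¹ ^ 11 = 1 := by rw [inv_pow, hζ, inv_one]
  have hshift : (fun j ↦ (traceWord (ZMod 3) 11 ζ y + traceWord (ZMod 3) 11 ζ⁻¹ y') (j + k)) =
      traceWord (ZMod 3) 11 ζ (y * ζ ^ (k : ℕ)) +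
        traceWord (ZMod 3) 11 ζ⁻¹ (y' * ζ⁻¹ ^ (k : ℕ)) := by
    ext j
    simp only [Pi.add_apply, traceWord_add hζ, traceWord_add hζinv]
  have hzero := (Submodule.mem_dualAnnihilator f).1 hf _ (hshift ▸ hk)
  rw [map_add, ← LinearMap.comp_apply, ← LinearMap.comp_apply, hy, hy', inv_pow] at hzero
  exact trace_add_trace_inv_ne_zero hK (by rw [pow_right_comm, hζ, one_pow]) hzero

theorem IsCyclicallyCovering.range_traceWord_le_or_range_traceWord_inv_le
    (hU : IsCyclicallyCovering U) (hK : finrank (ZMod 3) K = 5) (hζ : ζ ^ 11 = 1) :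
    LinearMap.range (traceWord (ZMod 3) 11 ζ) ≤ U ∨
      LinearMap.range (traceWord (ZMod 3) 11 ζ⁻¹) ≤ U := by
  have hunion : ∀ f ∈ U.dualAnnihilator,
      f ∈ (LinearMap.range (traceWord (ZMod 3) 11 ζ)).dualAnnihilator ∨
        f ∈ (LinearMap.range (traceWord (ZMod 3) 11 ζ⁻¹)).dualAnnihilator := fun f hf ↦ by
    rw [← LinearMap.ker_dualMap_eq_dualAnnihilator_range,
      ← LinearMap.ker_dualMap_eq_dualAnnihilator_range]
    exact hU.comp_traceWord_eq_zero_or_comp_traceWord_inv_eq_zero hK hζ hf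
  exact (AddSubgroupClass.subset_union.1 hunion).imp
    Subspace.dualAnnihilator_le_dualAnnihilator_iff.1
    Subspace.dualAnnihilator_le_dualAnnihilator_iff.1

theorem IsCyclicallyCovering.ten_le_finrank_of_range_traceWord_inv_le
    (hU : IsCyclicallyCovering U) (hK : finrank (ZMod 3) K = 5) (hζ : IsPrimitiveRoot ζ 11)
    (hle : LinearMap.range (traceWord (ZMod 3) 11 ζ⁻¹) ≤ U) : 10 ≤ finrank (ZMod 3) U := by
  have hW : ∀ y : K, ∃ z, z ^ 11 = 1 ∧ y * z ∈ U.comap (traceWord (ZMod 3) 11 ζ) := fun y ↦ by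
    obtain ⟨k, hk⟩ := isCyclicallyCovering_iff.1 hU (traceWord (ZMod 3) 11 ζ y)
    refine ⟨ζ ^ (k : ℕ), by rw [pow_right_comm, hζ.pow_eq_one, one_pow], ?_⟩
    have hshift := funext fun j ↦ traceWord_add (F := ZMod 3) hζ.pow_eq_one y j k
    exact Submodule.mem_comap.2 (hshift ▸ hk)
  have hfour := four_le_finrank_of_forall_exists_mul_mem hK hW
  have htop := range_traceWord_sup_eq_top hK hζ (hU.const_mem 1) hle
  have hdim : 11 + finrank (ZMod 3) (U.comap (traceWord (ZMod 3) 11 ζ)) =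
      5 + finrank (ZMod 3) U := by
    rw [← hK, ← finrank_add_finrank_comap htop, finrank_fin_fun]
  omega

theorem IsCyclicallyCovering.ten_le_finrank (hU : IsCyclicallyCovering U) :
    10 ≤ finrank (ZMod 3) U := by
  have hK : finrank (ZMod 3) (GaloisField 3 5) = 5 := GaloisField.finrank 3 (by norm_num)
  obtain ⟨ζ, hζ⟩ := exists_isPrimitiveRoot_eleven hK
  rcases hU.range_traceWord_le_or_range_traceWord_inv_le hK hζ.pow_eq_one with hle | hle
  · exact hU.ten_le_finrank_of_range_traceWord_inv_le hK hζ.inv (by rwa [inv_inv])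
  · exact hU.ten_le_finrank_of_range_traceWord_inv_le hK hζ hle

theorem exists_isCyclicallyCovering_finrank_eq_ten :
    ∃ U : Submodule (ZMod 3) (Fin 11 → ZMod 3),
      IsCyclicallyCovering U ∧ finrank (ZMod 3) U = 10 := by
  have hK : finrank (ZMod 3) (GaloisField 3 5) = 5 := GaloisField.finrank 3 (by norm_num)
  obtain ⟨ζ, hζ⟩ := exists_isPrimitiveRoot_eleven hK
  obtain ⟨U, hU, hdim⟩ := exists_isCyclicallyCovering_finrank_add_one_eq (F := ZMod 3) hζ <| by
    rw [Nat.card_zmod, hK]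
    intro e he
    have hdvd : ∀ a < 5, ∀ b < 5, ¬ 11 ∣ 3 ^ a + 3 ^ b := by decide
    have hsum : ∑ i, 3 ^ e i = 3 ^ e 0 + 3 ^ e 1 := Fin.sum_univ_two _
    exact hsum ▸ hdvd _ (he 0) _ (he 1)
  exact ⟨U, hU, by omega⟩

end Eleven

/-- `h_3(11) = 1`: there exists a cyclically covering subspace of `𝔽_3^{11}` of
codimension 1, but none of codimension 2. -/
theorem stmt13 :
    hcc (ZMod 3) 11 = 1 ∧
    (∃ U : Submodule (ZMod 3) (Fin 11 → ZMod 3), IsCyclicallyCovering U ∧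
      11 - Module.finrank (ZMod 3) U = 1) ∧
    (∀ U : Submodule (ZMod 3) (Fin 11 → ZMod 3), IsCyclicallyCovering U →
      11 - Module.finrank (ZMod 3) U ≠ 2) := by
  obtain ⟨U, hU, hdim⟩ := exists_isCyclicallyCovering_finrank_eq_ten
  refine ⟨IsGreatest.csSup_eq ⟨⟨U, hU, by rw [hdim]⟩, ?_⟩, ⟨U, hU, by rw [hdim]⟩, fun V hV ↦ ?_⟩
  · rintro _ ⟨V, hV, rfl⟩
    have := hV.ten_le_finrank
    omega
  · have := hV.ten_le_finrank
    omega
end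
end

section
/- Let q be a prime power and let m, n be positive integers. Let τ denote the cyclic shift operator on 𝔽_q^{mn} and let h_{τ^m}(𝔽_q^{mn}) denote the largest possible codimension of a subspace U ⊆ 𝔽_q^{mn} with ⋃_{k=0}^{n-1} τ^{mk}(U) = 𝔽_q^{mn}. If h_{q^m}(n) = k, then h_{τ^m}(𝔽_q^{mn}) ≥ mk. Consequently, if h_{τ^m}(𝔽_q^{mn}) ≤ m − 1, then h_{q^m}(n) = 0. -/
noncomputable section

/-- `hTauM F m n` is the largest possible codimension of a subspace `U ⊆ F^{mn}` with
`⋃_{k=0}^{n-1} (τ^m)^k(U) = F^{mn}`, where `τ` is the cyclic shift on `F^{mn}`. -/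
def hTauM (F : Type*) [Field F] (m n : ℕ) : ℕ :=
  sSup {k : ℕ | ∃ U : Submodule F (Fin (m * n) → F),
    (⋃ j ∈ Finset.range n,
      ⇑(cshift F (m * n) ^ (m * j)) '' (U : Set (Fin (m * n) → F))) = Set.univ ∧
    m * n - Module.finrank F U = k}

/-!
A basis of `K` over `F` of size `m` turns `K^n` into `F^{mn}` by writing the coordinates of each
entry as a block of `m` consecutive entries. Shifting the blocks by one place is shifting the
entries by `m` places, so this `F`-linear isomorphism intertwines `τ` on `K^n` with `τ^m` on
`F^{mn}`. It therefore carries a cyclically covering subspace over `K` to a subspace covering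
under `τ^m`, and it multiplies the codimension by `m`.
-/

open Function Module

theorem image_biUnion_image_iterate {α β : Type*} {φ : α → β} {f : α → α} {g : β → β}
    (h : Semiconj φ f g) (s : Finset ℕ) (U : Set α) :
    φ '' (⋃ i ∈ s, f^[i] '' U) = ⋃ i ∈ s, g^[i] '' (φ '' U) := by
  simp only [Set.image_iUnion, Set.image_image, (h.iterate_right _).eq]

theorem exists_algebra_finrank_eq_of_natCard_eq_pow {F K : Type*} [Field F] [Finite F] [Field K]
    {m : ℕ} (hcard : Nat.card K = Nat.card F ^ m) :
    ∃ _ : Algebra F K, finrank F K = m := by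
  have : Finite K := Nat.finite_of_card_ne_zero (hcard ▸ pow_ne_zero m Nat.card_pos.ne')
  have : NeZero m := ⟨by rintro rfl; exact Finite.one_lt_card.ne' (hcard.trans (pow_zero _))⟩
  obtain ⟨p, _⟩ := CharP.exists F
  have : Fact p.Prime := ⟨CharP.char_is_prime F p⟩
  let E := FiniteField.Extension F p m
  have hcardE : Nat.card E = Nat.card K := (FiniteField.natCard_extension F p m).trans hcard.symm
  have := Fintype.ofFinite E
  have := Fintype.ofFinite K
  let e : E ≃+* K := FiniteField.ringEquivOfCardEq <| by
    simpa only [Nat.card_eq_fintype_card] using hcardE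
  let _ : Algebra F K := (e.toRingHom.comp (algebraMap F E)).toAlgebra
  refine ⟨inferInstance, ?_⟩
  exact Nat.pow_right_injective Finite.one_lt_card (natCard_eq_pow_finrank.symm.trans hcard)

section Rotation

theorem val_finRotate {n : ℕ} (i : Fin n) : (finRotate n i : ℕ) = (i + 1) % n := by
  have := i.neZero
  rw [finRotate_apply, Fin.val_add, Fin.val_one', Nat.add_mod_mod]

theorem val_finRotate_pow {n : ℕ} (j : ℕ) (i : Fin n) :
    ((finRotate n ^ j) i : ℕ) = (i + j) % n := by
  induction j with
  | zero => exact (Nat.mod_eq_of_lt i.isLt).symm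
  | succ j ih =>
    rw [pow_succ', Equiv.Perm.mul_apply, val_finRotate, ih, Nat.mod_add_mod, add_assoc]

/-- The decomposition of `m * n` positions into `n` consecutive blocks of length `m`: the pair
`(a, i)` is sent to position `i` of block `a`, that is, to `i + m * a`. -/
def blockPosition (m n : ℕ) : Fin n × Fin m ≃ Fin (m * n) :=
  finProdFinEquiv.trans (finCongr (mul_comm n m))

theorem val_blockPosition {m n : ℕ} (a : Fin n) (i : Fin m) :
    (blockPosition m n (a, i) : ℕ) = i + m * a :=
  rfl

theorem finRotate_pow_blockPosition {m n : ℕ} (a : Fin n) (i : Fin m) :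
    (finRotate (m * n) ^ m) (blockPosition m n (a, i)) = blockPosition m n (finRotate n a, i) := by
  apply Fin.ext
  have hm : 0 < m := i.pos
  calc ((finRotate (m * n) ^ m) (blockPosition m n (a, i)) : ℕ)
      = (i + m * (a + 1)) % (m * n) := by
        rw [val_finRotate_pow, val_blockPosition, mul_add_one, add_assoc]
    _ = i + m * ((a + 1) % n) := by
        rw [Nat.mod_mul, Nat.add_mul_mod_self_left, Nat.add_mul_div_left _ _ hm,
          Nat.mod_eq_of_lt i.isLt, Nat.div_eq_of_lt i.isLt, zero_add]
    _ = blockPosition m n (finRotate n a, i) := by rw [val_blockPosition, val_finRotate]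

end Rotation

theorem cshift_pow_apply_finRotate_pow {F : Type*} [Field F] {n : ℕ} (j : ℕ) (x : Fin n → F)
    (i : Fin n) : (cshift F n ^ j) x ((finRotate n ^ j) i) = x i := by
  induction j with
  | zero => rfl
  | succ j ih =>
    rw [pow_succ', pow_succ', Equiv.Perm.mul_apply, End.mul_apply]
    exact (congrArg _ (Equiv.symm_apply_apply _ _)).trans ih

theorem le_hTauM {F : Type*} [Field F] {m n : ℕ} {U : Submodule F (Fin (m * n) → F)}
    (hU : ⋃ j ∈ Finset.range n, ⇑(cshift F (m * n) ^ (m * j)) '' (U : Set (Fin (m * n) → F)) =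
      Set.univ) :
    m * n - finrank F U ≤ hTauM F m n :=
  le_csSup ⟨m * n, by rintro _ ⟨_, -, rfl⟩; exact Nat.sub_le _ _⟩ ⟨U, hU, rfl⟩

section BlockCoordinates

variable {F K : Type*} [Field F] [Field K] [Algebra F K] {m n : ℕ}

/-- The `F`-linear identification of `K^n` with `F^{mn}` given by a basis of `K` over `F`: the
coordinates of the entry `x a` form block `a` of the image of `x`. -/
def blockCoordinates (b : Basis (Fin m) F K) (n : ℕ) : (Fin n → K) ≃ₗ[F] (Fin (m * n) → F) :=
  LinearEquiv.piCongrRight (fun _ ↦ b.equivFun) ≪≫ₗ (LinearEquiv.curry F F (Fin n) (Fin m)).symm ≪≫ₗ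
    LinearEquiv.funCongrLeft F F (blockPosition m n).symm

theorem blockCoordinates_apply_blockPosition (b : Basis (Fin m) F K) (x : Fin n → K) (a : Fin n)
    (i : Fin m) : blockCoordinates b n x (blockPosition m n (a, i)) = b.equivFun (x a) i := by
  simp [blockCoordinates, LinearMap.funLeft_apply]

theorem semiconj_blockCoordinates_cshift (b : Basis (Fin m) F K) (n : ℕ) :
    Semiconj (blockCoordinates b n) (cshift K n) ⇑(cshift F (m * n) ^ m) := by
  intro x
  ext p
  obtain ⟨⟨a, i⟩, rfl⟩ := ((blockPosition m n).trans (finRotate (m * n) ^ m)).surjective p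
  calc blockCoordinates b n (cshift K n x) ((finRotate (m * n) ^ m) (blockPosition m n (a, i)))
      = b.equivFun (cshift K n x (finRotate n a)) i := by
        rw [finRotate_pow_blockPosition, blockCoordinates_apply_blockPosition]
    _ = b.equivFun (x a) i := by
        rw [← pow_one (cshift K n), ← pow_one (finRotate n), cshift_pow_apply_finRotate_pow]
    _ = (cshift F (m * n) ^ m) (blockCoordinates b n x)
          ((finRotate (m * n) ^ m) (blockPosition m n (a, i))) := by
        rw [cshift_pow_apply_finRotate_pow, blockCoordinates_apply_blockPosition]

theorem IsCyclicallyCovering.biUnion_cshift_pow_map_blockCoordinates {U : Submodule K (Fin n → K)}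
    (hU : IsCyclicallyCovering U) (b : Basis (Fin m) F K) :
    ⋃ j ∈ Finset.range n, ⇑(cshift F (m * n) ^ (m * j)) ''
      ((U.restrictScalars F).map (blockCoordinates b n).toLinearMap : Set (Fin (m * n) → F)) =
      Set.univ := by
  have himage := image_biUnion_image_iterate (semiconj_blockCoordinates_cshift b n)
    (Finset.range n) (U : Set (Fin n → K))
  simp only [← End.coe_pow, ← pow_mul] at himage
  rw [IsCyclicallyCovering] at hU
  rw [hU, Set.image_univ, (blockCoordinates b n).surjective.range_eq] at himage
  exact himage.symm

theorem finrank_map_blockCoordinates (b : Basis (Fin m) F K) (U : Submodule K (Fin n → K)) :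
    finrank F ((U.restrictScalars F).map (blockCoordinates b n).toLinearMap) =
      m * finrank K U := by
  calc finrank F ((U.restrictScalars F).map (blockCoordinates b n).toLinearMap)
      = finrank F U := (blockCoordinates b n).finrank_map_eq (U.restrictScalars F)
    _ = finrank F K * finrank K U := (finrank_mul_finrank F K U).symm
    _ = m * finrank K U := by rw [finrank_eq_card_basis b, Fintype.card_fin]

theorem IsCyclicallyCovering.mul_codim_le_hTauM {U : Submodule K (Fin n → K)}
    (hU : IsCyclicallyCovering U) (b : Basis (Fin m) F K) :
    m * (n - finrank K U) ≤ hTauM F m n := by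
  rw [Nat.mul_sub, ← finrank_map_blockCoordinates b U]
  exact le_hTauM (hU.biUnion_cshift_pow_map_blockCoordinates b)

end BlockCoordinates

theorem finrank_mul_hcc_le_hTauM (F K : Type*) [Field F] [Field K] [Algebra F K]
    [FiniteDimensional F K] (n : ℕ) :
    finrank F K * hcc K n ≤ hTauM F (finrank F K) n := by
  rw [mul_comm, ← Nat.le_div_iff_mul_le finrank_pos]
  refine csSup_le' ?_
  rintro _ ⟨U, hU, rfl⟩
  rw [Nat.le_div_iff_mul_le finrank_pos, mul_comm]
  exact hU.mul_codim_le_hTauM (finBasis F K)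

theorem stmt15_general (F K : Type*) [Field F] [Field K] [Algebra F K] [FiniteDimensional F K]
    (n : ℕ) :
    finrank F K * hcc K n ≤ hTauM F (finrank F K) n ∧
      (hTauM F (finrank F K) n ≤ finrank F K - 1 → hcc K n = 0) := by
  have hle := finrank_mul_hcc_le_hTauM F K n
  refine ⟨hle, fun hlt ↦ ?_⟩
  have hmul_lt : finrank F K * hcc K n < finrank F K * 1 := by
    have : 0 < finrank F K := finrank_pos
    lia
  exact Nat.lt_one_iff.1 (Nat.lt_of_mul_lt_mul_left hmul_lt)

/-- Let `q` be a prime power and `m, n` positive integers.  If `h_{q^m}(n) = k`, then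
`h_{τ^m}(𝔽_q^{mn}) ≥ mk`.  Consequently, if `h_{τ^m}(𝔽_q^{mn}) ≤ m - 1`, then
`h_{q^m}(n) = 0`.  (Here `K` is the field with `q^m` elements.) -/
theorem stmt15 (F K : Type*) [Field F] [Fintype F] [Field K] [Fintype K]
    (m n : ℕ) (hm : 0 < m) (hn : 0 < n)
    (hcardK : Fintype.card K = Fintype.card F ^ m)
    (k : ℕ) (hk : hcc K n = k) :
    m * k ≤ hTauM F m n ∧ (hTauM F m n ≤ m - 1 → hcc K n = 0) := by
  obtain ⟨_, rfl⟩ := exists_algebra_finrank_eq_of_natCard_eq_pow (F := F) (K := K)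
    (by simpa only [Nat.card_eq_fintype_card] using hcardK)
  exact hk ▸ stmt15_general F K n
end
end

section
/- Let q be a prime power and let m, n be positive integers. Let τ denote the cyclic shift operator on 𝔽_q^{mn}. Then h_{τ^m}(𝔽_q^{mn}) ≤ ⌊log_q(n)⌋. -/
noncomputable section

section Covering

open Module
open scoped Pointwise

variable {k V E ι : Type*} [DivisionRing k] [AddCommGroup V] [Module k V]
  [AddCommGroup E] [Module k E] {s : Finset ι}

/-- B. H. Neumann's coset-cover theorem, applied to the cosets `0 +ᵥ p i`, yields some `p i` of
finite index at most `s.card`. When `k` is infinite, that `p i` is `⊤` and the power is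
`0 ^ 0 = 1`. -/
theorem exists_card_pow_finrank_quotient_le_card_of_biUnion_eq_univ {p : ι → Submodule k E}
    (hcovers : ⋃ i ∈ s, (p i : Set E) = Set.univ) :
    ∃ i ∈ s, Nat.card k ^ finrank k (E ⧸ p i) ≤ s.card := by
  have hcosets : ⋃ i ∈ s, (0 : E) +ᵥ ((p i).toAddSubgroup : Set E) = Set.univ := by
    simpa only [zero_vadd] using! hcovers
  obtain ⟨i, hi, hfinite, hindex⟩ :=
    AddSubgroup.exists_index_le_card_of_leftCoset_cover hcosets
  have : Finite (E ⧸ p i) := AddSubgroup.finite_quotient_of_finiteIndex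
  have hcard : Nat.card (E ⧸ p i) = Nat.card k ^ finrank k (E ⧸ p i) :=
    natCard_eq_pow_finrank
  exact ⟨i, hi, hcard.symm.trans_le hindex⟩

theorem card_pow_finrank_sub_finrank_le_card_of_biUnion_image_eq_univ [Finite k]
    [FiniteDimensional k E] {U : Submodule k V} [FiniteDimensional k U] {f : ι → V →ₗ[k] E}
    (hcovers : ⋃ i ∈ s, f i '' (U : Set V) = Set.univ) :
    Nat.card k ^ (finrank k E - finrank k U) ≤ s.card := by
  simp only [← Submodule.map_coe] at hcovers
  obtain ⟨i, -, hi⟩ := exists_card_pow_finrank_quotient_le_card_of_biUnion_eq_univ hcovers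
  have hcodim : finrank k E - finrank k U ≤ finrank k (E ⧸ U.map (f i)) := by
    rw [Submodule.finrank_quotient]
    exact Nat.sub_le_sub_left (Submodule.finrank_map_le (f i) U) _
  exact (Nat.pow_le_pow_right Nat.card_pos hcodim).trans hi

end Covering

/-- Let `q` be a prime power and `m, n` positive integers.  Then
`h_{τ^m}(𝔽_q^{mn}) ≤ ⌊log_q(n)⌋`. -/
theorem stmt16 (F : Type*) [Field F] [Fintype F]
    (m n : ℕ) (hm : 0 < m) (hn : 0 < n) :
    hTauM F m n ≤ Nat.log (Fintype.card F) n := by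
  refine csSup_le' ?_
  rintro _ ⟨U, hcovers, rfl⟩
  refine Nat.le_log_of_pow_le Fintype.one_lt_card ?_
  have hcard := card_pow_finrank_sub_finrank_le_card_of_biUnion_image_eq_univ hcovers
  rwa [Nat.card_eq_fintype_card, Module.finrank_fin_fun, Finset.card_range] at hcard
end
end
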